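/- arXiv:math/0203097 — 8 statements merged into one kernel-verified Lean document; each statement's English description precedes it below -/
import Mathlib

section
/- Assume dim E₊ = dim E₋. Then the assignment sending a unitary isomorphism φ : E₊ → E₋ to its graph {x + φ(x) : x ∈ E₊} is a bijection from the set of unitary (linear isometric) isomorphisms E₊ → E₋ onto the set of Lagrangian subspaces of H. In particular, every Lagrangian subspace W of H is the graph of a unique unitary isomorphism φ(W) : E₊ → E₋. -/
/-!
The operator `J = -iγ` is a symmetric involution, so it is the reflection `σ` in `E₊`; hence
`E₋ = E₊ᗮ`, and `W` is Lagrangian iff `σ W = Wᗮ`. The reflection maps the graph of `φ` to the graph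
of `-φ`, which for unitary `φ` is the orthogonal complement of the graph of `φ`. Conversely, let
`σ W = Wᗮ`. A vector `w ∈ W ∩ E₋` has `-w = σ w ∈ Wᗮ`, so it vanishes. Decomposing `x ∈ E₊` along
`H = W ⊕ σ W`, the symmetry `σ x = x` forces `x = w + σ w`, twice the projection of `w`. So `W`
projects bijectively onto `E₊`, and likewise onto `E₋`. Finally `⟪σ w, w⟫ = 0` says that the two
projections of `w` have the same norm, so that `W` is the graph of a unitary map.
-/

open scoped InnerProductSpace

section InternalGraph

variable {R M : Type*} [Ring R] [AddCommGroup M] [Module R M] {p q : Submodule R M}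

/-- The graph `{x + f x | x ∈ p}` of a linear map `f : p → q` between two submodules of `M`, as a
submodule of `M` rather than of `p × q`. -/
def internalGraph (f : p →ₗ[R] q) : Submodule R M :=
  LinearMap.range (p.subtype + q.subtype ∘ₗ f)

theorem mem_internalGraph {f : p →ₗ[R] q} {v : M} :
    v ∈ internalGraph f ↔ ∃ x : p, v = x + f x := by
  simp only [internalGraph, LinearMap.mem_range, LinearMap.add_apply, Submodule.subtype_apply,
    LinearMap.comp_apply, eq_comm]

theorem coe_add_coe_mem_internalGraph (h : Disjoint p q) {f : p →ₗ[R] q} {x : p} {y : q} :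
    (x : M) + y ∈ internalGraph f ↔ y = f x := by
  rw [mem_internalGraph]
  refine ⟨fun ⟨x', hx'⟩ ↦ ?_, fun hy ↦ ⟨x, by rw [hy]⟩⟩
  have hsub : ((x - x' : p) : M) = (f x' - y : q) := by
    simpa only [Submodule.coe_sub, sub_eq_sub_iff_add_eq_add, add_comm] using hx'
  have hx : x - x' = 0 := Submodule.eq_zero_of_coe_mem_of_disjoint h (hsub ▸ (f x' - y).2)
  rw [hx, ZeroMemClass.coe_zero, eq_comm, ZeroMemClass.coe_eq_zero] at hsub
  rw [sub_eq_zero.1 hx, sub_eq_zero.1 hsub]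

theorem internalGraph_injective (h : Disjoint p q) :
    Function.Injective (internalGraph : (p →ₗ[R] q) → Submodule R M) := by
  intro f g hfg
  ext1 x
  rw [← coe_add_coe_mem_internalGraph h, ← hfg, coe_add_coe_mem_internalGraph h]

end InternalGraph

section InnerProductSpace

variable {𝕜 E : Type*} [RCLike 𝕜] [NormedAddCommGroup E] [InnerProductSpace 𝕜 E]

section Lagrangian

/-- `W` is Lagrangian for the endomorphism `γ` if `γ W` is the orthogonal complement of `W`. No
condition is put on `γ`, so that the notion applies both to a complex structure and to the
reflection of which it is a multiple. -/
def IsLagrangian (γ : E →ₗ[𝕜] E) (W : Submodule 𝕜 E) : Prop :=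
  W.map γ = Wᗮ

variable {γ : E →ₗ[𝕜] E} {W : Submodule 𝕜 E}

theorem isLagrangian_smul_iff {c : 𝕜} (hc : c ≠ 0) :
    IsLagrangian (c • γ) W ↔ IsLagrangian γ W := by
  rw [IsLagrangian, IsLagrangian, Submodule.map_smul _ _ _ hc]

theorem IsLagrangian.map_mem_orthogonal (hW : IsLagrangian γ W) {w : E} (hw : w ∈ W) :
    γ w ∈ Wᗮ :=
  hW ▸ Submodule.mem_map_of_mem hw

theorem IsLagrangian.isClosed (hW : IsLagrangian γ W) (hγ : Continuous γ)
    (hinj : Function.Injective γ) : IsClosed (W : Set E) := by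
  rw [← Submodule.comap_map_eq_of_injective hinj W, hW]
  exact W.isClosed_orthogonal.preimage hγ

end Lagrangian

section Reflection

variable {K : Submodule 𝕜 E} [K.HasOrthogonalProjection]

theorem reflection_coe_add_coe (x : K) (y : Kᗮ) : K.reflection ((x : E) + y) = x - y := by
  rw [map_add, K.reflection_mem_subspace_eq_self x.2,
    K.reflection_mem_subspace_orthogonalComplement_eq_neg y.2, sub_eq_add_neg]

theorem map_reflection_internalGraph (f : K →ₗ[𝕜] Kᗮ) :
    (internalGraph f).map K.reflection.toLinearMap = internalGraph (-f) := by
  rw [internalGraph, ← LinearMap.range_comp, internalGraph]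
  congr 1
  ext x
  simpa [sub_eq_add_neg] using reflection_coe_add_coe x (f x)

theorem orthogonal_internalGraph (φ : K ≃ₗᵢ[𝕜] Kᗮ) :
    (internalGraph φ.toLinearMap)ᗮ = internalGraph (-φ.toLinearMap) := by
  ext v
  obtain ⟨a, b, rfl⟩ : ∃ (a : K) (b : Kᗮ), (a : E) + b = v :=
    ⟨_, _, K.starProjection_add_starProjection_orthogonal v⟩
  have inner_graph (x : K) : ⟪(x : E) + φ x, (a : E) + b⟫_𝕜 = ⟪φ x, φ a + b⟫_𝕜 := by
    rw [inner_add_left, inner_add_right, inner_add_right, inner_add_right, φ.inner_map_map,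
      Submodule.inner_right_of_mem_orthogonal x.2 b.2,
      Submodule.inner_left_of_mem_orthogonal a.2 (φ x).2, add_zero, zero_add,
      Submodule.coe_inner, Submodule.coe_inner]
  calc (a : E) + b ∈ (internalGraph φ.toLinearMap)ᗮ
      ↔ ∀ x : K, ⟪φ x, φ a + b⟫_𝕜 = 0 := by
        simp only [Submodule.mem_orthogonal, mem_internalGraph, forall_exists_index,
          forall_eq_apply_imp_iff, ← inner_graph]
        rfl
    _ ↔ ∀ y : Kᗮ, ⟪y, φ a + b⟫_𝕜 = 0 :=
        (φ.surjective.forall (p := fun y ↦ ⟪y, φ a + b⟫_𝕜 = 0)).symm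
    _ ↔ φ a + b = 0 := ⟨fun h ↦ inner_self_eq_zero.1 (h _), fun h y ↦ by rw [h, inner_zero_right]⟩
    _ ↔ b = -φ a := add_eq_zero_iff_neg_eq.trans eq_comm
    _ ↔ (a : E) + b ∈ internalGraph (-φ.toLinearMap) :=
        (coe_add_coe_mem_internalGraph (f := -φ.toLinearMap) K.orthogonal_disjoint).symm

theorem isLagrangian_internalGraph (φ : K ≃ₗᵢ[𝕜] Kᗮ) :
    IsLagrangian K.reflection.toLinearMap (internalGraph φ.toLinearMap) :=
  (map_reflection_internalGraph _).trans (orthogonal_internalGraph φ).symm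

namespace IsLagrangian

variable {W : Submodule 𝕜 E}

theorem norm_projection_eq (hW : IsLagrangian K.reflection.toLinearMap W) {w : E} (hw : w ∈ W) :
    ‖K.orthogonalProjectionOnto w‖ = ‖Kᗮ.orthogonalProjectionOnto w‖ := by
  set x := K.orthogonalProjectionOnto w
  set y := Kᗮ.orthogonalProjectionOnto w
  have hxy : (x : E) + y = w := K.starProjection_add_starProjection_orthogonal w
  have hinner : ⟪(x : E) + y, x - y⟫_𝕜 = 0 := by
    rw [← reflection_coe_add_coe, hxy]
    exact Submodule.inner_right_of_mem_orthogonal hw (hW.map_mem_orthogonal hw)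
  rw [inner_add_left, inner_sub_right, inner_sub_right,
    Submodule.inner_right_of_mem_orthogonal x.2 y.2,
    Submodule.inner_left_of_mem_orthogonal x.2 y.2, sub_zero, zero_sub, ← sub_eq_add_neg,
    sub_eq_zero, inner_self_eq_norm_sq_to_K, inner_self_eq_norm_sq_to_K] at hinner
  exact (sq_eq_sq₀ (norm_nonneg _) (norm_nonneg _)).1 (mod_cast hinner)

theorem reflection_orthogonal (hW : IsLagrangian K.reflection.toLinearMap W) :
    IsLagrangian Kᗮ.reflection.toLinearMap W := by
  have hneg : Kᗮ.reflection.toLinearMap = (-1 : 𝕜) • K.reflection.toLinearMap := by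
    ext v
    simpa using K.reflection_orthogonal_apply v
  rwa [hneg, isLagrangian_smul_iff (neg_ne_zero.2 one_ne_zero)]

theorem injective_projection (hW : IsLagrangian K.reflection.toLinearMap W) :
    Function.Injective (K.orthogonalProjectionOnto.toLinearMap.domRestrict W) := by
  rw [injective_iff_map_eq_zero]
  intro w hw
  have hwK : (w : E) ∈ Kᗮ := Submodule.orthogonalProjectionOnto_eq_zero_iff.1 hw
  have hwW : -(w : E) ∈ Wᗮ := K.reflection_mem_subspace_orthogonalComplement_eq_neg hwK ▸
    hW.map_mem_orthogonal w.2
  exact Submodule.eq_zero_of_coe_mem_of_disjoint W.orthogonal_disjoint (neg_mem_iff.1 hwW)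

theorem exists_eq_add_reflection [W.HasOrthogonalProjection]
    (hW : IsLagrangian K.reflection.toLinearMap W) {x : E} (hx : x ∈ K) :
    ∃ w ∈ W, x = w + K.reflection w := by
  obtain ⟨w, hw, hxw⟩ := Submodule.HasOrthogonalProjection.exists_orthogonal (K := W) x
  obtain ⟨w', hw', hσw' : K.reflection w' = x - w⟩ : x - w ∈ W.map K.reflection.toLinearMap :=
    hW ▸ hxw
  have hσx : K.reflection w + w' = x := by
    rw [← K.reflection_reflection w', ← map_add, hσw', add_sub_cancel,
      K.reflection_mem_subspace_eq_self hx]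
  have hfixed : K.reflection (w - w') = w - w' := by
    rw [map_sub, hσw', ← hσx]
    abel
  have hww' : w - w' = 0 := Submodule.disjoint_def.1 W.orthogonal_disjoint _ (sub_mem hw hw')
    (hfixed ▸ hW.map_mem_orthogonal (sub_mem hw hw'))
  exact ⟨w, hw, by rw [← hσx, sub_eq_zero.1 hww', add_comm]⟩

theorem surjective_projection [W.HasOrthogonalProjection]
    (hW : IsLagrangian K.reflection.toLinearMap W) :
    Function.Surjective (K.orthogonalProjectionOnto.toLinearMap.domRestrict W) := by
  intro x
  obtain ⟨w, hw, hx⟩ := hW.exists_eq_add_reflection x.2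
  refine ⟨(2 : ℕ) • ⟨w, hw⟩, Subtype.ext ?_⟩
  rw [hx, K.reflection_apply, add_sub_cancel, map_nsmul]
  rfl

/-- The orthogonal projection onto `K` as a linear isomorphism from a Lagrangian subspace `W`. -/
noncomputable def projectionEquiv [W.HasOrthogonalProjection]
    (hW : IsLagrangian K.reflection.toLinearMap W) : W ≃ₗ[𝕜] K :=
  LinearEquiv.ofBijective (K.orthogonalProjectionOnto.toLinearMap.domRestrict W)
    ⟨hW.injective_projection, hW.surjective_projection⟩

theorem coe_projectionEquiv_add_coe_projectionEquiv [W.HasOrthogonalProjection]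
    (hW : IsLagrangian K.reflection.toLinearMap W) (w : W) :
    (hW.projectionEquiv w : E) + hW.reflection_orthogonal.projectionEquiv w = w :=
  K.starProjection_add_starProjection_orthogonal w

/-- The unitary isomorphism `φ(W) : K → Kᗮ` attached to a Lagrangian subspace `W`: it sends the
component in `K` of each vector of `W` to its component in `Kᗮ`. -/
noncomputable def toLinearIsometryEquiv [W.HasOrthogonalProjection]
    (hW : IsLagrangian K.reflection.toLinearMap W) : K ≃ₗᵢ[𝕜] Kᗮ where
  toLinearEquiv := hW.projectionEquiv.symm.trans hW.reflection_orthogonal.projectionEquiv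
  norm_map' x := by
    obtain ⟨w, rfl⟩ := hW.projectionEquiv.surjective x
    rw [LinearEquiv.trans_apply, LinearEquiv.symm_apply_apply]
    exact (hW.norm_projection_eq w.2).symm

theorem internalGraph_toLinearIsometryEquiv [W.HasOrthogonalProjection]
    (hW : IsLagrangian K.reflection.toLinearMap W) :
    internalGraph hW.toLinearIsometryEquiv.toLinearMap = W := by
  ext v
  calc v ∈ internalGraph hW.toLinearIsometryEquiv.toLinearMap
      ↔ ∃ x : K, v = x + hW.toLinearIsometryEquiv x := mem_internalGraph
    _ ↔ ∃ w : W, v = hW.projectionEquiv w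
          + hW.toLinearIsometryEquiv (hW.projectionEquiv w) := hW.projectionEquiv.surjective.exists
    _ ↔ ∃ w : W, v = hW.projectionEquiv w + hW.reflection_orthogonal.projectionEquiv w := by
        simp only [toLinearIsometryEquiv, LinearIsometryEquiv.coe_mk, LinearEquiv.trans_apply,
          LinearEquiv.symm_apply_apply]
    _ ↔ v ∈ W := by
        simp only [coe_projectionEquiv_add_coe_projectionEquiv, Subtype.exists, exists_prop,
          exists_eq_right']

theorem existsUnique_internalGraph_eq [W.HasOrthogonalProjection]
    (hW : IsLagrangian K.reflection.toLinearMap W) :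
    ∃! φ : K ≃ₗᵢ[𝕜] Kᗮ, internalGraph φ.toLinearMap = W := by
  refine ⟨hW.toLinearIsometryEquiv, hW.internalGraph_toLinearIsometryEquiv, fun ψ hψ ↦ ?_⟩
  have hlin := internalGraph_injective K.orthogonal_disjoint
    (hψ.trans hW.internalGraph_toLinearIsometryEquiv.symm)
  exact LinearIsometryEquiv.ext (LinearMap.congr_fun hlin)

end IsLagrangian

end Reflection

section SymmetricInvolution

variable {J : E →ₗ[𝕜] E} {K : Submodule 𝕜 E}

theorem sub_apply_mem_orthogonal_of_isSymmetric (hJ : J.IsSymmetric)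
    (hK : ∀ x ∈ K, J x = x) (v : E) : v - J v ∈ Kᗮ := by
  intro x hx
  rw [inner_sub_right, ← hJ, hK x hx, sub_self]

theorem exists_eq_reflection_of_isSymmetric_of_involutive (hJ : J.IsSymmetric)
    (hinv : Function.Involutive J) (hK : ∀ x, x ∈ K ↔ J x = x) :
    ∃ _ : K.HasOrthogonalProjection, J = K.reflection.toLinearMap := by
  have hmem (v : E) : (2⁻¹ : 𝕜) • (v + J v) ∈ K :=
    K.smul_mem _ ((hK _).2 (by rw [map_add, hinv, add_comm]))
  have horth (v : E) : v - (2⁻¹ : 𝕜) • (v + J v) ∈ Kᗮ := by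
    have hv : v - (2⁻¹ : 𝕜) • (v + J v) = (2⁻¹ : 𝕜) • (v - J v) := by module
    exact hv ▸ Kᗮ.smul_mem _ (sub_apply_mem_orthogonal_of_isSymmetric hJ (fun x ↦ (hK x).1) v)
  have : K.HasOrthogonalProjection := ⟨fun v ↦ ⟨_, hmem v, horth v⟩⟩
  refine ⟨this, LinearMap.ext fun v ↦ ?_⟩
  calc J v = 2 • (2⁻¹ : 𝕜) • (v + J v) - v := by module
    _ = 2 • K.starProjection v - v := by
      rw [Submodule.eq_starProjection_of_mem_orthogonal (hmem v) (horth v)]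
    _ = K.reflection v := (K.reflection_apply v).symm

theorem reflection_eq_neg_iff [K.HasOrthogonalProjection] {x : E} :
    K.reflection x = -x ↔ x ∈ Kᗮ := by
  rw [← Submodule.reflection_eq_self_iff, K.reflection_orthogonal_apply, neg_eq_iff_eq_neg]

end SymmetricInvolution

end InnerProductSpace

section ComplexStructure

open Complex

theorem involutive_neg_I_smul {V : Type*} [AddCommGroup V] [Module ℂ V] {γ : V →ₗ[ℂ] V}
    (hγ_sq : ∀ x : V, γ (γ x) = -x) : Function.Involutive (-I • γ) := by
  intro x
  simp only [neg_smul, LinearMap.neg_apply, LinearMap.smul_apply, map_neg, map_smul, hγ_sq,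
    smul_neg, smul_smul, I_mul_I, one_smul, neg_neg]

variable {H : Type*} [NormedAddCommGroup H] [InnerProductSpace ℂ H] {γ : H →ₗ[ℂ] H}

theorem isSymmetric_neg_I_smul (hγ_unitary : ∀ x y : H, ⟪γ x, γ y⟫_ℂ = ⟪x, y⟫_ℂ)
    (hγ_sq : ∀ x : H, γ (γ x) = -x) : (-I • γ).IsSymmetric := by
  intro x y
  have hskew : ⟪γ x, y⟫_ℂ = -⟪x, γ y⟫_ℂ := by
    rw [← hγ_unitary (γ x) y, hγ_sq, inner_neg_left]
  simp only [LinearMap.smul_apply, inner_smul_left, inner_smul_right, hskew, map_neg, conj_I,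
    neg_neg, mul_neg, neg_mul]

theorem exists_eq_I_smul_reflection (hγ_unitary : ∀ x y : H, ⟪γ x, γ y⟫_ℂ = ⟪x, y⟫_ℂ)
    (hγ_sq : ∀ x : H, γ (γ x) = -x) {Ep Em : Submodule ℂ H}
    (hEp : Ep = LinearMap.ker (γ - I • LinearMap.id))
    (hEm : Em = LinearMap.ker (γ + I • LinearMap.id)) :
    ∃ _ : Ep.HasOrthogonalProjection, γ = I • Ep.reflection.toLinearMap ∧ Em = Epᗮ := by
  have hγ : γ = I • (-I • γ) := by simp only [smul_smul, mul_neg, I_mul_I, neg_neg, one_smul]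
  have hmem (x : H) : x ∈ Ep ↔ (-I • γ) x = x := by
    rw [hEp, LinearMap.mem_ker, LinearMap.sub_apply, sub_eq_zero, LinearMap.smul_apply,
      LinearMap.smul_apply, LinearMap.id_apply, ← inv_I, inv_smul_eq_iff₀ I_ne_zero]
  obtain ⟨hproj, hJ⟩ := exists_eq_reflection_of_isSymmetric_of_involutive
    (isSymmetric_neg_I_smul hγ_unitary hγ_sq) (involutive_neg_I_smul hγ_sq) hmem
  refine ⟨hproj, hJ ▸ hγ, Submodule.ext fun x ↦ ?_⟩
  have hx : (-I • γ) x = Ep.reflection x := LinearMap.congr_fun hJ x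
  rw [← reflection_eq_neg_iff, ← hx, hEm, LinearMap.mem_ker, LinearMap.add_apply,
    add_eq_zero_iff_eq_neg, LinearMap.smul_apply, LinearMap.smul_apply, LinearMap.id_apply,
    ← inv_I, inv_smul_eq_iff₀ I_ne_zero, smul_neg]

end ComplexStructure

theorem stmt_2_general
    (H : Type*) [NormedAddCommGroup H] [InnerProductSpace ℂ H] [CompleteSpace H]
    (γ : H →ₗ[ℂ] H)
    (hγ_unitary : ∀ x y : H, (inner ℂ (γ x) (γ y) : ℂ) = inner ℂ x y)
    (hγ_sq : ∀ x : H, γ (γ x) = -x)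
    (Ep Em : Submodule ℂ H)
    (hEp : Ep = LinearMap.ker (γ - Complex.I • LinearMap.id))
    (hEm : Em = LinearMap.ker (γ + Complex.I • LinearMap.id)) :
    (∀ φ : ↥Ep ≃ₗᵢ[ℂ] ↥Em, ∃ W : Submodule ℂ H,
        W.map γ = Wᗮ ∧ (∀ v : H, v ∈ W ↔ ∃ x : ↥Ep, v = (x : H) + ((φ x : ↥Em) : H))) ∧
    (∀ W : Submodule ℂ H, W.map γ = Wᗮ →
        ∃! φ : ↥Ep ≃ₗᵢ[ℂ] ↥Em,
          ∀ v : H, v ∈ W ↔ ∃ x : ↥Ep, v = (x : H) + ((φ x : ↥Em) : H)) := by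
  obtain ⟨_, hγ, rfl⟩ := exists_eq_I_smul_reflection hγ_unitary hγ_sq hEp hEm
  have lagrangian_iff (W : Submodule ℂ H) :
      W.map γ = Wᗮ ↔ IsLagrangian Ep.reflection.toLinearMap W :=
    hγ ▸ isLagrangian_smul_iff Complex.I_ne_zero
  have graph_iff (φ : Ep ≃ₗᵢ[ℂ] Epᗮ) (W : Submodule ℂ H) :
      internalGraph φ.toLinearMap = W ↔ ∀ v : H, v ∈ W ↔ ∃ x : Ep, v = x + φ x := by
    simp only [eq_comm (b := W), Submodule.ext_iff, mem_internalGraph]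
    rfl
  simp only [lagrangian_iff, ← graph_iff]
  refine ⟨fun φ ↦ ⟨_, isLagrangian_internalGraph φ, rfl⟩, fun W hW ↦ ?_⟩
  have : CompleteSpace W :=
    (hW.isClosed Ep.reflection.continuous Ep.reflection.injective).completeSpace_coe
  exact hW.existsUnique_internalGraph_eq

/-- Assume `dim E₊ = dim E₋`.  Then sending a unitary isomorphism
`φ : E₊ → E₋` to its graph `{x + φ x | x ∈ E₊}` is a bijection from the set of
unitary isomorphisms `E₊ ≃ E₋` onto the set of Lagrangian subspaces of `H`:
every graph is a Lagrangian subspace, and every Lagrangian subspace `W` is the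
graph of a unique unitary isomorphism `φ(W) : E₊ → E₋`. -/
theorem stmt_2
    (H : Type*) [NormedAddCommGroup H] [InnerProductSpace ℂ H] [FiniteDimensional ℂ H]
    (γ : H →ₗ[ℂ] H)
    (hγ_unitary : ∀ x y : H, (inner ℂ (γ x) (γ y) : ℂ) = inner ℂ x y)
    (hγ_sq : ∀ x : H, γ (γ x) = -x)
    (Ep Em : Submodule ℂ H)
    (hEp : Ep = LinearMap.ker (γ - Complex.I • LinearMap.id))
    (hEm : Em = LinearMap.ker (γ + Complex.I • LinearMap.id))
    (hdim : Module.finrank ℂ ↥Ep = Module.finrank ℂ ↥Em) :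
    -- the graph of each unitary isomorphism `E₊ → E₋` is a Lagrangian subspace
    (∀ φ : ↥Ep ≃ₗᵢ[ℂ] ↥Em, ∃ W : Submodule ℂ H,
        W.map γ = Wᗮ ∧ (∀ v : H, v ∈ W ↔ ∃ x : ↥Ep, v = (x : H) + ((φ x : ↥Em) : H))) ∧
    -- every Lagrangian subspace is the graph of a unique unitary isomorphism
    (∀ W : Submodule ℂ H, W.map γ = Wᗮ →
        ∃! φ : ↥Ep ≃ₗᵢ[ℂ] ↥Em,
          ∀ v : H, v ∈ W ↔ ∃ x : ↥Ep, v = (x : H) + ((φ x : ↥Em) : H)) := by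
  have := FiniteDimensional.complete ℂ H
  exact stmt_2_general H γ hγ_unitary hγ_sq Ep Em hEp hEm
end

section
/- For Lagrangian subspaces V and W of H, the map x ↦ x + φ(V)(x) restricts to a linear isomorphism from ker(φ(V) − φ(W)) ⊆ E₊ onto V ∩ W. Consequently, dim(V ∩ W) equals the dimension of the eigenspace of the unitary automorphism −φ(V) ∘ φ(W)⁻¹ of E₋ for the eigenvalue −1. -/
/-!
A vector of `M` has at most one decomposition as a sum of vectors from two disjoint submodules
`E` and `F`. Hence `x + f x = y + g y` forces `x = y` and `f x = g x`, so the graphs of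
`f, g : E → F` meet exactly over `ker (f - g)`. If `g` is invertible, it carries `ker (f - g)` onto
the fixed vectors of `f ∘ g⁻¹`, which are the `(-1)`-eigenvectors of `-f ∘ g⁻¹`.
-/

section Graph

variable {R M : Type*} [Ring R] [AddCommGroup M] [Module R M] {E F : Submodule R M}

/-- The parametrization `x ↦ x + f x` of the graph of `f : E → F`, viewed inside the common ambient
module `M` of `E` and `F`. The range of this map is the graph as a submodule of `M`, whereas
`LinearMap.graph` is a submodule of `E × F`. -/
def graphMap (f : E →ₗ[R] F) : E →ₗ[R] M :=
  E.subtype + F.subtype ∘ₗ f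

theorem graphMap_apply (f : E →ₗ[R] F) (x : E) : graphMap f x = (x : M) + (f x : M) :=
  rfl

theorem graphMap_eq_graphMap_iff (hEF : Disjoint E F) {f g : E →ₗ[R] F} {x y : E} :
    graphMap f x = graphMap g y ↔ x = y ∧ f x = g y := by
  refine ⟨fun h ↦ ?_, fun ⟨hxy, hfg⟩ ↦ by rw [graphMap_apply, graphMap_apply, hfg, hxy]⟩
  have hsum : ((x - y : E) : M) + ((f x - g y : F) : M) = 0 := by
    rw [Submodule.coe_sub, Submodule.coe_sub, sub_add_sub_comm, sub_eq_zero]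
    exact h
  obtain ⟨hE, hF⟩ := Submodule.disjoint_iff_add_eq_zero.mp hEF (x - y).2 (f x - g y).2 hsum
  exact ⟨sub_eq_zero.mp (Subtype.ext hE), sub_eq_zero.mp (Subtype.ext hF)⟩

theorem graphMap_injective (hEF : Disjoint E F) (f : E →ₗ[R] F) :
    Function.Injective (graphMap f) :=
  fun _ _ h ↦ ((graphMap_eq_graphMap_iff hEF).mp h).1

theorem map_graphMap_ker_sub (hEF : Disjoint E F) (f g : E →ₗ[R] F) :
    (LinearMap.ker (f - g)).map (graphMap f) =
      LinearMap.range (graphMap f) ⊓ LinearMap.range (graphMap g) := by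
  rw [← LinearMap.eqLocus_eq_ker_sub]
  ext v
  constructor
  · rintro ⟨x, hx, rfl⟩
    exact ⟨⟨x, rfl⟩, x, (graphMap_eq_graphMap_iff hEF).mpr ⟨rfl, hx.symm⟩⟩
  · rintro ⟨⟨x, rfl⟩, y, hy⟩
    obtain ⟨rfl, hfg⟩ := (graphMap_eq_graphMap_iff hEF).mp hy
    exact ⟨y, hfg.symm, rfl⟩

end Graph

section Eigenspace

variable {R M N : Type*} [CommRing R] [AddCommGroup M] [Module R M] [AddCommGroup N] [Module R N]

theorem eigenspace_neg_neg (f : Module.End R M) (μ : R) :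
    (-f).eigenspace (-μ) = f.eigenspace μ := by
  ext x
  simp only [Module.End.mem_eigenspace_iff, LinearMap.neg_apply, neg_smul, neg_inj]

theorem eigenspace_comp_symm (f : M →ₗ[R] N) (g : M ≃ₗ[R] N) (μ : R) :
    Module.End.eigenspace (f ∘ₗ g.symm.toLinearMap) μ =
      (LinearMap.ker (f - μ • g.toLinearMap)).map g.toLinearMap := by
  ext z
  obtain ⟨x, rfl⟩ := g.surjective z
  simp [sub_eq_zero]

theorem disjoint_ker_sub_smul_id_ker_add_smul_id [IsDomain R] [Module.IsTorsionFree R M]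
    (f : Module.End R M) {μ : R} (hμ : μ ≠ -μ) :
    Disjoint (LinearMap.ker (f - μ • LinearMap.id)) (LinearMap.ker (f + μ • LinearMap.id)) := by
  have h := f.disjoint_genEigenspace hμ 1 1
  rwa [Module.End.genEigenspace_one, Module.End.genEigenspace_one, neg_smul, sub_neg_eq_add] at h

end Eigenspace

theorem stmt_4_general {R M : Type*} [CommRing R] [AddCommGroup M] [Module R M]
    {E F V W : Submodule R M} (hEF : Disjoint E F) (f : E →ₗ[R] F) (g : E ≃ₗ[R] F)
    (hV : ∀ v : M, v ∈ V ↔ ∃ x : E, v = (x : M) + (f x : M))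
    (hW : ∀ v : M, v ∈ W ↔ ∃ x : E, v = (x : M) + (g x : M)) :
    (∃ e : LinearMap.ker (f - g.toLinearMap) ≃ₗ[R] ↥(V ⊓ W),
        ∀ x, (e x : M) = ((x : E) : M) + (f x : M)) ∧
    Module.rank R ↥(V ⊓ W) =
      Module.rank R (Module.End.eigenspace (-(f ∘ₗ g.symm.toLinearMap)) (-1)) := by
  obtain rfl : V = LinearMap.range (graphMap f) :=
    Submodule.ext fun v ↦ (hV v).trans (exists_congr fun _ ↦ eq_comm)
  obtain rfl : W = LinearMap.range (graphMap g.toLinearMap) :=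
    Submodule.ext fun v ↦ (hW v).trans (exists_congr fun _ ↦ eq_comm)
  let e := (LinearMap.ker (f - g.toLinearMap)).equivMapOfInjective _ (graphMap_injective hEF f)
  rw [← map_graphMap_ker_sub hEF]
  refine ⟨⟨e, fun _ ↦ rfl⟩, ?_⟩
  rw [eigenspace_neg_neg, eigenspace_comp_symm, one_smul, ← e.rank_eq]
  exact (g.submoduleMap _).rank_eq

/-- For Lagrangian subspaces `V` and `W` of `H` with graph unitaries
`φ(V), φ(W) : E₊ → E₋`, the map `x ↦ x + φ(V) x` restricts to a linear isomorphism
from `ker (φ(V) - φ(W)) ⊆ E₊` onto `V ∩ W`.  Consequently `dim (V ∩ W)` equals the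
dimension of the `(-1)`-eigenspace of the unitary automorphism `-φ(V) ∘ φ(W)⁻¹` of `E₋`. -/
theorem stmt_4
    (H : Type*) [NormedAddCommGroup H] [InnerProductSpace ℂ H] [FiniteDimensional ℂ H]
    (γ : H →ₗ[ℂ] H)
    (hγ_unitary : ∀ x y : H, (inner ℂ (γ x) (γ y) : ℂ) = inner ℂ x y)
    (hγ_sq : ∀ x : H, γ (γ x) = -x)
    (Ep Em : Submodule ℂ H)
    (hEp : Ep = LinearMap.ker (γ - Complex.I • LinearMap.id))
    (hEm : Em = LinearMap.ker (γ + Complex.I • LinearMap.id))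
    (V W : Submodule ℂ H) (hV : V.map γ = Vᗮ) (hW : W.map γ = Wᗮ)
    (φV φW : ↥Ep ≃ₗᵢ[ℂ] ↥Em)
    (hφV : ∀ v : H, v ∈ V ↔ ∃ x : ↥Ep, v = (x : H) + ((φV x : ↥Em) : H))
    (hφW : ∀ v : H, v ∈ W ↔ ∃ x : ↥Ep, v = (x : H) + ((φW x : ↥Em) : H)) :
    (∃ e : ↥(LinearMap.ker (φV.toLinearEquiv.toLinearMap - φW.toLinearEquiv.toLinearMap))
            ≃ₗ[ℂ] ↥(V ⊓ W),
        ∀ x, ((e x : H)) = ((x : ↥Ep) : H) + ((φV (x : ↥Ep) : ↥Em) : H)) ∧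
    Module.finrank ℂ ↥(V ⊓ W) =
      Module.finrank ℂ
        ↥(Module.End.eigenspace
            (-((φW.symm.trans φV).toLinearEquiv.toLinearMap) : Module.End ℂ ↥Em) (-1)) := by
  subst hEp hEm
  have hdisj := disjoint_ker_sub_smul_id_ker_add_smul_id γ (self_ne_neg.mpr Complex.I_ne_zero)
  exact (stmt_4_general hdisj φV.toLinearEquiv.toLinearMap φW.toLinearEquiv hφV hφW).imp_right
    (congrArg Cardinal.toNat)
end

section
/- For Lagrangian subspaces V and W of H: m(γ(V), γ(W)) = m(V,W). -/
/-- The invariant `m(V,W)` of a pair of Lagrangian subspaces, defined (as in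
Kirk–Lesch) by `m(V,W) = -(1/(πi)) Σ_{λ ≠ -1} log λ`, the sum running over the
eigenvalues `λ ≠ -1` (counted with algebraic multiplicity, i.e. over the roots of
the characteristic polynomial) of the unitary automorphism `-φ(V) ∘ φ(W)⁻¹` of `E₋`,
where `log` is the branch with argument in `(-π, π]` (this is `Complex.log`). -/
noncomputable def mInv {H : Type*} [NormedAddCommGroup H] [InnerProductSpace ℂ H]
    [FiniteDimensional ℂ H] {Ep Em : Submodule ℂ H}
    (φV φW : ↥Ep ≃ₗᵢ[ℂ] ↥Em) : ℂ :=
  -(1 / ((Real.pi : ℂ) * Complex.I)) *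
    (((LinearMap.charpoly
          (-((φW.symm.trans φV).toLinearEquiv.toLinearMap) : ↥Em →ₗ[ℂ] ↥Em)).roots.filter
        (fun l => l ≠ -1)).map Complex.log).sum

/-!
Since `γ` acts as `i` on `E₊` and as `-i` on `E₋`, it carries `x + φ x` to `i x - φ (i x)`. Hence
the graph unitary of `γ(V)` is `-φ(V)`, and the two signs cancel in `φ(γ(V)) ∘ φ(γ(W))⁻¹`, the only
datum on which `m` depends.
-/

section Graph

variable {R M : Type*} [Ring R] [AddCommGroup M] [Module R M] {p q : Submodule R M}

/-- `V` is the graph `{x + f x : x ∈ p}` of `f : p → q`, formed inside the common ambient module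
of `p` and `q` rather than in `p × q` as for `LinearMap.graph`. -/
def IsGraph (V : Submodule R M) (f : p →ₗ[R] q) : Prop :=
  ∀ v : M, v ∈ V ↔ ∃ x : p, v = (x : M) + (f x : M)

theorem IsGraph.unique {V : Submodule R M} {f g : p →ₗ[R] q} (hpq : Disjoint p q)
    (hf : IsGraph V f) (hg : IsGraph V g) : f = g := by
  ext x
  obtain ⟨y, hxy⟩ := (hg _).1 ((hf _).2 ⟨x, rfl⟩)
  have hsum : ((x - y : p) : M) + ((f x - g y : q) : M) = 0 := by
    push_cast
    rw [sub_add_sub_comm, hxy, sub_self]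
  obtain ⟨hx, hfx⟩ := Submodule.disjoint_iff_add_eq_zero.1 hpq (x - y).2 (f x - g y).2 hsum
  obtain rfl : x = y := sub_eq_zero.1 (Subtype.ext hx)
  exact sub_eq_zero.1 hfx

end Graph

section Eigenspace

open Module.End

theorem eigenspace_neg_eq_ker_add {R M : Type*} [CommRing R] [AddCommGroup M] [Module R M]
    (γ : Module.End R M) (a : R) :
    eigenspace γ (-a) = LinearMap.ker (γ + a • LinearMap.id) := by
  rw [eigenspace_def, neg_smul, sub_neg_eq_add, Module.End.one_eq_id]

variable {K M : Type*} [Field K] [AddCommGroup M] [Module K M] {γ : Module.End K M} {a b : K}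
  {p q V : Submodule K M}

theorem IsGraph.map_of_le_eigenspace {f : p →ₗ[K] q} (hp : p ≤ eigenspace γ a)
    (hq : q ≤ eigenspace γ b) (ha : a ≠ 0) (hf : IsGraph V f) :
    IsGraph (V.map γ) ((b / a) • f) := by
  have hγ (x : p) : γ (x + f x) = (a • x : p) + (((b / a) • f) (a • x) : q) := by
    rw [map_add, mem_eigenspace_iff.1 (hp x.2), mem_eigenspace_iff.1 (hq (f x).2),
      LinearMap.smul_apply, map_smul, smul_smul, div_mul_cancel₀ b ha, Submodule.coe_smul,
      Submodule.coe_smul]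
  refine fun v ↦ ⟨?_, ?_⟩
  · rintro ⟨w, hw, rfl⟩
    obtain ⟨x, rfl⟩ := (hf w).1 hw
    exact ⟨a • x, hγ x⟩
  · rintro ⟨x, rfl⟩
    refine ⟨_, (hf _).2 ⟨a⁻¹ • x, rfl⟩, ?_⟩
    rw [hγ, smul_inv_smul₀ ha]

theorem IsGraph.eq_smul_of_map {f g : p →ₗ[K] q} (hp : p ≤ eigenspace γ a)
    (hq : q ≤ eigenspace γ b) (ha : a ≠ 0) (hab : a ≠ b) (hf : IsGraph V f)
    (hg : IsGraph (V.map γ) g) : g = (b / a) • f :=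
  hg.unique ((γ.disjoint_genEigenspace hab 1 1).mono hp hq) (hf.map_of_le_eigenspace hp hq ha)

end Eigenspace

theorem symm_trans_eq_of_eq_smul {R E F : Type*} [Semiring R] [SeminormedAddCommGroup E]
    [SeminormedAddCommGroup F] [Module R E] [Module R F] {e₁ e₂ e₁' e₂' : E ≃ₗᵢ[R] F} {c : R}
    (h₁ : ∀ x, e₁' x = c • e₁ x) (h₂ : ∀ x, e₂' x = c • e₂ x) :
    e₂'.symm.trans e₁' = e₂.symm.trans e₁ := by
  ext y
  obtain ⟨x, rfl⟩ := e₂'.surjective y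
  calc
    e₁' (e₂'.symm (e₂' x)) = c • e₁ x := by rw [e₂'.symm_apply_apply, h₁]
    _ = e₁ (e₂.symm (e₂' x)) := by rw [h₂, map_smul, e₂.symm_apply_apply, map_smul]

theorem stmt_7_general {H : Type*} [NormedAddCommGroup H] [InnerProductSpace ℂ H]
    [FiniteDimensional ℂ H] {γ : Module.End ℂ H} {a b : ℂ} {p q V W : Submodule ℂ H}
    (hp : p ≤ γ.eigenspace a) (hq : q ≤ γ.eigenspace b) (ha : a ≠ 0) (hab : a ≠ b)
    {φV φW ψV ψW : p ≃ₗᵢ[ℂ] q}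
    (hφV : IsGraph V φV.toLinearEquiv.toLinearMap)
    (hφW : IsGraph W φW.toLinearEquiv.toLinearMap)
    (hψV : IsGraph (V.map γ) ψV.toLinearEquiv.toLinearMap)
    (hψW : IsGraph (W.map γ) ψW.toLinearEquiv.toLinearMap) :
    mInv ψV ψW = mInv φV φW := by
  have hV := hφV.eq_smul_of_map hp hq ha hab hψV
  have hW := hφW.eq_smul_of_map hp hq ha hab hψW
  rw [mInv, mInv, symm_trans_eq_of_eq_smul (LinearMap.congr_fun hV) (LinearMap.congr_fun hW)]

/-- For Lagrangian subspaces `V` and `W` of `H`: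
`m(γ(V), γ(W)) = m(V,W)`.  Here `φV, φW` are the graph unitaries of `V, W` and
`ψV, ψW` are the graph unitaries of `γ(V), γ(W)`. -/
theorem stmt_7
    (H : Type*) [NormedAddCommGroup H] [InnerProductSpace ℂ H] [FiniteDimensional ℂ H]
    (γ : H →ₗ[ℂ] H)
    (hγ_unitary : ∀ x y : H, (inner ℂ (γ x) (γ y) : ℂ) = inner ℂ x y)
    (hγ_sq : ∀ x : H, γ (γ x) = -x)
    (Ep Em : Submodule ℂ H)
    (hEp : Ep = LinearMap.ker (γ - Complex.I • LinearMap.id))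
    (hEm : Em = LinearMap.ker (γ + Complex.I • LinearMap.id))
    (V W : Submodule ℂ H) (hV : V.map γ = Vᗮ) (hW : W.map γ = Wᗮ)
    (φV φW ψV ψW : ↥Ep ≃ₗᵢ[ℂ] ↥Em)
    (hφV : ∀ v : H, v ∈ V ↔ ∃ x : ↥Ep, v = (x : H) + ((φV x : ↥Em) : H))
    (hφW : ∀ v : H, v ∈ W ↔ ∃ x : ↥Ep, v = (x : H) + ((φW x : ↥Em) : H))
    (hψV : ∀ v : H, v ∈ V.map γ ↔ ∃ x : ↥Ep, v = (x : H) + ((ψV x : ↥Em) : H))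
    (hψW : ∀ v : H, v ∈ W.map γ ↔ ∃ x : ↥Ep, v = (x : H) + ((ψW x : ↥Em) : H)) :
    mInv ψV ψW = mInv φV φW :=
  stmt_7_general (hEp.trans Module.End.eigenspace_def.symm).le
    (hEm.trans (eigenspace_neg_eq_ker_add γ Complex.I).symm).le Complex.I_ne_zero
    (self_ne_neg.2 Complex.I_ne_zero) hφV hφW hψV hψW
end

section
/- For any three Lagrangian subspaces U, V, W of H, the triple index σ̃(U,V,W) = m(U,V) + m(V,W) + m(W,U) is an integer. -/
/-!
Exponentiating `2πi · m(V, W)` removes the choice of logarithms: it gives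
`det (-φ(V) φ(W)⁻¹) ^ (-2)`, since an eigenvalue `-1`, left out of the sum, contributes `1` to the
square of the determinant. The square also absorbs the sign of `-φ(V) φ(W)⁻¹`, and the
determinants of `φ(U) φ(V)⁻¹`, `φ(V) φ(W)⁻¹` and `φ(W) φ(U)⁻¹` multiply to `1`.
-/

theorem prod_filter_pow_eq_prod_pow {M : Type*} [CommMonoid M] (s : Multiset M) (p : M → Prop)
    [DecidablePred p] {n : ℕ} (h : ∀ a ∈ s, ¬p a → a ^ n = 1) :
    (s.filter p).prod ^ n = s.prod ^ n := by
  have prod_filter_not : (s.filter (¬p ·)).prod ^ n = 1 :=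
    Multiset.prod_induction (· ^ n = 1) _ (fun a b ha hb ↦ by rw [mul_pow, ha, hb, one_mul])
      (one_pow n) fun a ha ↦ h a (Multiset.mem_of_mem_filter ha) (Multiset.mem_filter.mp ha).2
  rw [← s.prod_filter_mul_prod_filter_not p, mul_pow, prod_filter_not, mul_one]

theorem exp_sum_map_log {s : Multiset ℂ} (h : 0 ∉ s) :
    Complex.exp (s.map Complex.log).sum = s.prod := by
  have exp_log : ∀ z ∈ s, Complex.exp (Complex.log z) = z := fun z hz ↦
    Complex.exp_log (ne_of_mem_of_not_mem hz h)
  simp only [Complex.exp_multiset_sum, Multiset.map_map, Function.comp_apply,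
    Multiset.map_congr rfl exp_log, Multiset.map_id']

theorem exp_two_mul_sum_map_log_filter_ne_neg_one {s : Multiset ℂ} (h : 0 ∉ s) :
    Complex.exp (2 * ((s.filter (· ≠ -1)).map Complex.log).sum) = s.prod ^ 2 := by
  have zero_notMem : 0 ∉ s.filter (· ≠ -1) := fun h₀ ↦ h (Multiset.mem_of_mem_filter h₀)
  have sq_eq_one : ∀ z ∈ s, ¬z ≠ -1 → z ^ 2 = 1 := fun z _ hz ↦ by
    rw [not_not.mp hz, neg_one_sq]
  calc Complex.exp (2 * ((s.filter (· ≠ -1)).map Complex.log).sum)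
      = Complex.exp ((s.filter (· ≠ -1)).map Complex.log).sum ^ 2 := Complex.exp_nat_mul _ 2
    _ = (s.filter (· ≠ -1)).prod ^ 2 := by rw [exp_sum_map_log zero_notMem]
    _ = s.prod ^ 2 := prod_filter_pow_eq_prod_pow s _ sq_eq_one

theorem exp_two_mul_sum_log_roots_charpoly {E : Type*} [AddCommGroup E] [Module ℂ E]
    [FiniteDimensional ℂ E] {f : E →ₗ[ℂ] E} (hf : LinearMap.det f ≠ 0) :
    Complex.exp (2 * ((f.charpoly.roots.filter (· ≠ -1)).map Complex.log).sum) =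
      LinearMap.det f ^ 2 := by
  have det_eq : LinearMap.det f = f.charpoly.roots.prod :=
    Module.End.det_eq_prod_roots_charpoly_of_splits (IsAlgClosed.splits _)
  rw [det_eq] at hf ⊢
  exact exp_two_mul_sum_map_log_filter_ne_neg_one (mt Multiset.prod_eq_zero hf)

theorem det_neg_sq {R M : Type*} [CommRing R] [AddCommGroup M] [Module R M] (f : M →ₗ[R] M) :
    LinearMap.det (-f) ^ 2 = LinearMap.det f ^ 2 := by
  simp only [sq, ← map_mul, neg_mul_neg]

theorem det_symm_trans_mul_det_symm_trans {R M N : Type*} [CommRing R] [AddCommGroup M]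
    [Module R M] [AddCommGroup N] [Module R N] (e f g : M ≃ₗ[R] N) :
    LinearEquiv.det (f.symm.trans e) * LinearEquiv.det (g.symm.trans f) =
      LinearEquiv.det (g.symm.trans e) := by
  rw [← LinearEquiv.det_trans]
  congr 1
  ext x
  simp

section MInv

variable {H : Type*} [NormedAddCommGroup H] [InnerProductSpace ℂ H] [FiniteDimensional ℂ H]
  {Ep Em : Submodule ℂ H}

theorem exp_two_pi_I_mul_mInv (φV φW : Ep ≃ₗᵢ[ℂ] Em) :
    Complex.exp (2 * Real.pi * Complex.I * mInv φV φW) =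
      ((LinearEquiv.det (φW.toLinearEquiv.symm.trans φV.toLinearEquiv) ^ 2)⁻¹ : ℂˣ) := by
  let f : Em ≃ₗ[ℂ] Em := φW.toLinearEquiv.symm.trans φV.toLinearEquiv
  let logSum := (((-f.toLinearMap).charpoly.roots.filter (· ≠ -1)).map Complex.log).sum
  have det_neg_ne_zero : LinearMap.det (-f.toLinearMap) ≠ 0 := by
    rw [← pow_ne_zero_iff two_ne_zero, det_neg_sq]
    exact pow_ne_zero 2 f.isUnit_det'.ne_zero
  have two_pi_I_mul_mInv : 2 * Real.pi * Complex.I * mInv φV φW = -(2 * logSum) := by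
    have mInv_eq : mInv φV φW = -(1 / (Real.pi * Complex.I)) * logSum := rfl
    rw [mInv_eq]
    field_simp
  rw [two_pi_I_mul_mInv, Complex.exp_neg, exp_two_mul_sum_log_roots_charpoly det_neg_ne_zero,
    det_neg_sq, Units.val_inv_eq_inv_val, Units.val_pow_eq_pow_val, LinearEquiv.coe_det]

theorem stmt_8_general (φU φV φW : Ep ≃ₗᵢ[ℂ] Em) :
    ∃ n : ℤ, mInv φU φV + mInv φV φW + mInv φW φU = n := by
  have exp_eq_one : Complex.exp
      (2 * Real.pi * Complex.I * (mInv φU φV + mInv φV φW + mInv φW φU)) = 1 := by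
    simp only [mul_add, Complex.exp_add, exp_two_pi_I_mul_mInv, ← Units.val_mul, ← mul_inv,
      ← mul_pow, det_symm_trans_mul_det_symm_trans, LinearEquiv.symm_trans_self,
      LinearEquiv.det_refl, one_pow, inv_one, Units.val_one]
  obtain ⟨n, hn⟩ := Complex.exp_eq_one_iff.mp exp_eq_one
  exact ⟨n, mul_left_cancel₀ Complex.two_pi_I_ne_zero (hn.trans (mul_comm _ _))⟩

end MInv

/-- For any three Lagrangian subspaces `U`, `V`, `W` of `H`, the
triple (Maslov) index `σ̃(U,V,W) = m(U,V) + m(V,W) + m(W,U)` is an integer. -/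
theorem stmt_8
    (H : Type*) [NormedAddCommGroup H] [InnerProductSpace ℂ H] [FiniteDimensional ℂ H]
    (γ : H →ₗ[ℂ] H)
    (hγ_unitary : ∀ x y : H, (inner ℂ (γ x) (γ y) : ℂ) = inner ℂ x y)
    (hγ_sq : ∀ x : H, γ (γ x) = -x)
    (Ep Em : Submodule ℂ H)
    (hEp : Ep = LinearMap.ker (γ - Complex.I • LinearMap.id))
    (hEm : Em = LinearMap.ker (γ + Complex.I • LinearMap.id))
    (U V W : Submodule ℂ H) (hU : U.map γ = Uᗮ) (hV : V.map γ = Vᗮ) (hW : W.map γ = Wᗮ)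
    (φU φV φW : ↥Ep ≃ₗᵢ[ℂ] ↥Em)
    (hφU : ∀ v : H, v ∈ U ↔ ∃ x : ↥Ep, v = (x : H) + ((φU x : ↥Em) : H))
    (hφV : ∀ v : H, v ∈ V ↔ ∃ x : ↥Ep, v = (x : H) + ((φV x : ↥Em) : H))
    (hφW : ∀ v : H, v ∈ W ↔ ∃ x : ↥Ep, v = (x : H) + ((φW x : ↥Em) : H)) :
    ∃ n : ℤ, mInv φU φV + mInv φV φW + mInv φW φU = (n : ℂ) :=
  stmt_8_general φU φV φW
end

section
/- For any Lagrangian subspaces V₁, V₂, W₁, W₂ of H the following identity holds: m(V₁,V₂) − m(γ(V₁),W₁) + m(γ(V₂),W₂) − m(W₁,W₂) = σ̃(V₁,V₂,γ(W₂)) − σ̃(γ(V₁),W₁,W₂). -/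
/-- The triple (Maslov) index `σ̃(U,V,W) = m(U,V) + m(V,W) + m(W,U)`, expressed in
terms of the graph unitaries of the three Lagrangian subspaces. -/
noncomputable def sigmaTilde {H : Type*} [NormedAddCommGroup H] [InnerProductSpace ℂ H]
    [FiniteDimensional ℂ H] {Ep Em : Submodule ℂ H}
    (φU φV φW : ↥Ep ≃ₗᵢ[ℂ] ↥Em) : ℂ :=
  mInv φU φV + mInv φV φW + mInv φW φU

/-!
If `γ` acts as `c` on `E₊` and as `-c` on `E₋`, then `γ (x + φ x) = c x - φ (c x)`, so `γ` carries
the graph of `φ` to the graph of `-φ`. Since `(-φ) ∘ ψ⁻¹ = φ ∘ (-ψ)⁻¹`, it follows that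
`m(γ(V), W) = m(V, γ(W))`. Applied to `(V₂, W₂)` and `(W₂, V₁)`, this matches up all the terms of
the two sides.
-/

section SumGraph

variable {R M : Type*} [Ring R] [AddCommGroup M] [Module R M] {p q : Submodule R M}

/-- The graph `{x + f x : x ∈ p}` of a linear map `f : p → q` between submodules of `M`, formed
inside `M` itself rather than in `p × q` as for `LinearMap.graph`. -/
def sumGraph (f : p →ₗ[R] q) : Submodule R M :=
  LinearMap.range (p.subtype + q.subtype ∘ₗ f)

theorem mem_sumGraph {f : p →ₗ[R] q} {v : M} :
    v ∈ sumGraph f ↔ ∃ x : p, v = (x : M) + (f x : M) := by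
  simp only [sumGraph, LinearMap.mem_range, LinearMap.add_apply, LinearMap.comp_apply,
    Submodule.subtype_apply, eq_comm]

theorem eq_sumGraph_iff {V : Submodule R M} {f : p →ₗ[R] q} :
    V = sumGraph f ↔ ∀ v, v ∈ V ↔ ∃ x : p, v = (x : M) + (f x : M) := by
  simp only [SetLike.ext_iff, mem_sumGraph]

theorem sumGraph_injective (hpq : Disjoint p q) :
    Function.Injective (sumGraph : (p →ₗ[R] q) → Submodule R M) := by
  intro f g hfg
  ext x
  obtain ⟨y, hxy⟩ : ∃ y : p, (x : M) + (f x : M) = (y : M) + (g y : M) :=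
    mem_sumGraph.1 (hfg ▸ mem_sumGraph.2 ⟨x, rfl⟩)
  have hsub : ((x - y : p) : M) = ((g y - f x : q) : M) := by
    rw [Submodule.coe_sub, Submodule.coe_sub, sub_eq_sub_iff_add_eq_add, hxy, add_comm]
  have hzero : ((x - y : p) : M) = 0 :=
    Submodule.disjoint_def.1 hpq _ (x - y).2 (hsub ▸ (g y - f x).2)
  obtain rfl : x = y := sub_eq_zero.1 (Subtype.ext hzero)
  exact add_left_cancel hxy

end SumGraph

theorem map_sumGraph_of_le_eigenspace {K M : Type*} [Field K] [AddCommGroup M] [Module K M]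
    {γ : Module.End K M} {p q : Submodule K M} {a b : K} (ha : a ≠ 0)
    (hp : p ≤ γ.eigenspace a) (hq : q ≤ γ.eigenspace b) (f : p →ₗ[K] q) :
    (sumGraph f).map γ = sumGraph ((b / a) • f) := by
  have hγp (x : p) : γ x = a • (x : M) := Module.End.mem_eigenspace_iff.1 (hp x.2)
  have hγq (y : q) : γ y = b • (y : M) := Module.End.mem_eigenspace_iff.1 (hq y.2)
  have hγ (x : p) : γ (x + f x) = (a • x : p) + (((b / a) • f) (a • x) : q) := by
    simp only [map_add, map_smul, hγp, hγq, LinearMap.smul_apply, smul_smul, Submodule.coe_smul,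
      mul_div_cancel₀ b ha]
  ext v
  simp only [Submodule.mem_map, mem_sumGraph]
  constructor
  · rintro ⟨_, ⟨x, rfl⟩, rfl⟩
    exact ⟨a • x, hγ x⟩
  · rintro ⟨x, rfl⟩
    exact ⟨_, ⟨a⁻¹ • x, rfl⟩, by rw [hγ, smul_inv_smul₀ ha]⟩

section GraphIsometry

variable {H : Type*} [NormedAddCommGroup H] [InnerProductSpace ℂ H] {Ep Em : Submodule ℂ H}

theorem eq_trans_neg_of_map_sumGraph_eq {γ : Module.End ℂ H} {c : ℂ} (hc : c ≠ 0)
    (hEp : Ep ≤ γ.eigenspace c) (hEm : Em ≤ γ.eigenspace (-c)) {φ ψ : Ep ≃ₗᵢ[ℂ] Em}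
    (h : (sumGraph φ.toLinearEquiv.toLinearMap).map γ = sumGraph ψ.toLinearEquiv.toLinearMap) :
    ψ = φ.trans (.neg ℂ) := by
  have hdisj : Disjoint Ep Em :=
    (γ.disjoint_genEigenspace (self_ne_neg.2 hc) 1 1).mono hEp hEm
  have hψ : ψ.toLinearEquiv.toLinearMap = (-c / c) • φ.toLinearEquiv.toLinearMap :=
    sumGraph_injective hdisj (h.symm.trans (map_sumGraph_of_le_eigenspace hc hEp hEm _))
  ext x : 1
  calc ψ x = (-c / c) • φ x := LinearMap.congr_fun hψ x
    _ = -φ x := by rw [neg_div_self hc, neg_one_smul]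

variable [FiniteDimensional ℂ H]

theorem mInv_trans_neg_left (φ ψ : Ep ≃ₗᵢ[ℂ] Em) :
    mInv (φ.trans (.neg ℂ)) ψ = mInv φ (ψ.trans (.neg ℂ)) := by
  have hcomp : ψ.symm.trans (φ.trans (.neg ℂ)) = (ψ.trans (.neg ℂ)).symm.trans φ := by
    ext y
    simp
  simp only [mInv, hcomp]

theorem stmt_9_general {γ : Module.End ℂ H} {c : ℂ} (hc : c ≠ 0)
    (hEp : Ep ≤ γ.eigenspace c) (hEm : Em ≤ γ.eigenspace (-c))
    {φV₁ φV₂ φW₁ φW₂ ψV₁ ψV₂ ψW₂ : Ep ≃ₗᵢ[ℂ] Em}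
    (hV₁ : (sumGraph φV₁.toLinearEquiv.toLinearMap).map γ = sumGraph ψV₁.toLinearEquiv.toLinearMap)
    (hV₂ : (sumGraph φV₂.toLinearEquiv.toLinearMap).map γ = sumGraph ψV₂.toLinearEquiv.toLinearMap)
    (hW₂ : (sumGraph φW₂.toLinearEquiv.toLinearMap).map γ =
      sumGraph ψW₂.toLinearEquiv.toLinearMap) :
    mInv φV₁ φV₂ - mInv ψV₁ φW₁ + mInv ψV₂ φW₂ - mInv φW₁ φW₂
      = sigmaTilde φV₁ φV₂ ψW₂ - sigmaTilde ψV₁ φW₁ φW₂ := by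
  obtain rfl := eq_trans_neg_of_map_sumGraph_eq hc hEp hEm hV₁
  obtain rfl := eq_trans_neg_of_map_sumGraph_eq hc hEp hEm hV₂
  obtain rfl := eq_trans_neg_of_map_sumGraph_eq hc hEp hEm hW₂
  simp only [sigmaTilde, mInv_trans_neg_left φV₂ φW₂, mInv_trans_neg_left φW₂ φV₁]
  ring

end GraphIsometry

/-- For Lagrangian subspaces `V₁, V₂, W₁, W₂` of `H` (with graph
unitaries `φV₁, φV₂, φW₁, φW₂`, and with `ψV₁, ψV₂, ψW₂` the graph unitaries of
`γ(V₁), γ(V₂), γ(W₂)`):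
`m(V₁,V₂) − m(γ(V₁),W₁) + m(γ(V₂),W₂) − m(W₁,W₂) = σ̃(V₁,V₂,γ(W₂)) − σ̃(γ(V₁),W₁,W₂)`. -/
theorem stmt_9
    (H : Type*) [NormedAddCommGroup H] [InnerProductSpace ℂ H] [FiniteDimensional ℂ H]
    (γ : H →ₗ[ℂ] H)
    (hγ_unitary : ∀ x y : H, (inner ℂ (γ x) (γ y) : ℂ) = inner ℂ x y)
    (hγ_sq : ∀ x : H, γ (γ x) = -x)
    (Ep Em : Submodule ℂ H)
    (hEp : Ep = LinearMap.ker (γ - Complex.I • LinearMap.id))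
    (hEm : Em = LinearMap.ker (γ + Complex.I • LinearMap.id))
    (V₁ V₂ W₁ W₂ : Submodule ℂ H)
    (hV₁ : V₁.map γ = V₁ᗮ) (hV₂ : V₂.map γ = V₂ᗮ)
    (hW₁ : W₁.map γ = W₁ᗮ) (hW₂ : W₂.map γ = W₂ᗮ)
    (φV₁ φV₂ φW₁ φW₂ ψV₁ ψV₂ ψW₂ : ↥Ep ≃ₗᵢ[ℂ] ↥Em)
    (hφV₁ : ∀ v : H, v ∈ V₁ ↔ ∃ x : ↥Ep, v = (x : H) + ((φV₁ x : ↥Em) : H))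
    (hφV₂ : ∀ v : H, v ∈ V₂ ↔ ∃ x : ↥Ep, v = (x : H) + ((φV₂ x : ↥Em) : H))
    (hφW₁ : ∀ v : H, v ∈ W₁ ↔ ∃ x : ↥Ep, v = (x : H) + ((φW₁ x : ↥Em) : H))
    (hφW₂ : ∀ v : H, v ∈ W₂ ↔ ∃ x : ↥Ep, v = (x : H) + ((φW₂ x : ↥Em) : H))
    (hψV₁ : ∀ v : H, v ∈ V₁.map γ ↔ ∃ x : ↥Ep, v = (x : H) + ((ψV₁ x : ↥Em) : H))
    (hψV₂ : ∀ v : H, v ∈ V₂.map γ ↔ ∃ x : ↥Ep, v = (x : H) + ((ψV₂ x : ↥Em) : H))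
    (hψW₂ : ∀ v : H, v ∈ W₂.map γ ↔ ∃ x : ↥Ep, v = (x : H) + ((ψW₂ x : ↥Em) : H)) :
    mInv φV₁ φV₂ - mInv ψV₁ φW₁ + mInv ψV₂ φW₂ - mInv φW₁ φW₂
      = sigmaTilde φV₁ φV₂ ψW₂ - sigmaTilde ψV₁ φW₁ φW₂ := by
  have hp : Ep ≤ Module.End.eigenspace γ Complex.I :=
    (hEp.trans Module.End.eigenspace_def.symm).le
  have hm : Em ≤ Module.End.eigenspace γ (-Complex.I) := by
    rw [hEm, Module.End.eigenspace_def, neg_smul, sub_neg_eq_add]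
    rfl
  obtain rfl := eq_sumGraph_iff.2 hφV₁
  obtain rfl := eq_sumGraph_iff.2 hφV₂
  obtain rfl := eq_sumGraph_iff.2 hφW₂
  exact stmt_9_general Complex.I_ne_zero hp hm
    (eq_sumGraph_iff.2 hψV₁) (eq_sumGraph_iff.2 hψV₂) (eq_sumGraph_iff.2 hψW₂)
end

section
/- If V ⊆ H₀ × H₁ is a Lagrangian subspace (γ(V) = V^⊥) and W ⊆ H₀ is a Lagrangian subspace (γ₀(W) = W^⊥), then the symplectic reduction L := {x₁ ∈ H₁ : there exists w ∈ W with (w, x₁) ∈ V} is a Lagrangian subspace of H₁, i.e. γ₁(L) = L^⊥. (This is the linear-algebraic content of the statement that the map L_{X,α}(W) = P₁(V ∩ (W ⊕ H₁)) induced by a bordism takes Lagrangian subspaces to Lagrangian subspaces.) -/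
/-!
Symplectic reduction commutes with taking orthogonal complements: a vector `y` is orthogonal to the
reduction of `V` by `W` exactly when `(0, y)` lies in `(V ⊓ (W × H₁))ᗮ = Vᗮ ⊔ (Wᗮ × 0)`, that is,
when `(u, y) ∈ Vᗮ` for some `u ∈ Wᗮ`; the sum is closed because `Wᗮ` is finite-dimensional. It also
commutes with product maps `γ₀ × γ₁` for injective `γ₀`. For Lagrangian `V` and `W` the two facts
say that `γ₁ L` and `Lᗮ` are both the reduction of `Vᗮ` by `Wᗮ`.
-/

open scoped ENNReal

section Reduction

variable {R M N M' N' : Type*} {p : ℝ≥0∞} [Semiring R]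
  [AddCommGroup M] [Module R M] [AddCommGroup N] [Module R N]
  [AddCommGroup M'] [Module R M'] [AddCommGroup N'] [Module R N']

/-- The symplectic reduction of `V ⊆ M × N` by `W ⊆ M`: the image of `W` under `V` viewed as a
linear relation from `M` to `N`. No symplectic structure enters the definition; the product is a
`WithLp` so that it also applies to `ℓ²` products of inner product spaces. -/
def symplecticReduction (V : Submodule R (WithLp p (M × N))) (W : Submodule R M) :
    Submodule R N :=
  (V ⊓ W.comap (WithLp.fstₗ p R M N)).map (WithLp.sndₗ p R M N)

theorem mem_symplecticReduction {V : Submodule R (WithLp p (M × N))} {W : Submodule R M} {y : N} :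
    y ∈ symplecticReduction V W ↔ ∃ w ∈ W, WithLp.toLp p (w, y) ∈ V := by
  constructor
  · rintro ⟨z, ⟨hzV, hzW⟩, rfl⟩
    exact ⟨z.fst, hzW, hzV⟩
  · rintro ⟨w, hw, hwy⟩
    exact ⟨WithLp.toLp p (w, y), ⟨hwy, hw⟩, rfl⟩

theorem symplecticReduction_map (V : Submodule R (WithLp p (M × N))) (W : Submodule R M)
    {f : M →ₗ[R] M'} (hf : Function.Injective f) (g : N →ₗ[R] N') :
    symplecticReduction (V.map ((f.prodMap g).withLpMap p)) (W.map f) =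
      (symplecticReduction V W).map g := by
  ext y
  simp only [mem_symplecticReduction, Submodule.mem_map]
  constructor
  · rintro ⟨_, ⟨w, hw, rfl⟩, z, hz, hzy⟩
    have hfst : f z.fst = f w := congrArg WithLp.fst hzy
    have hsnd : g z.snd = y := congrArg WithLp.snd hzy
    exact ⟨z.snd, ⟨z.fst, hf hfst ▸ hw, hz⟩, hsnd⟩
  · rintro ⟨x, ⟨w, hw, hwx⟩, rfl⟩
    exact ⟨f w, ⟨w, hw, rfl⟩, WithLp.toLp p (w, x), hwx, rfl⟩

end Reduction

section Orthogonal

variable {𝕜 E F : Type*} [RCLike 𝕜] [NormedAddCommGroup E] [InnerProductSpace 𝕜 E]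
  [NormedAddCommGroup F] [InnerProductSpace 𝕜 F]

theorem orthogonal_inf_eq_sup_of_finiteDimensional_orthogonal [CompleteSpace E]
    {K L : Submodule 𝕜 E} (hK : IsClosed (K : Set E)) (hL : IsClosed (L : Set E))
    [FiniteDimensional 𝕜 Lᗮ] : (K ⊓ L)ᗮ = Kᗮ ⊔ Lᗮ := by
  have hsup : IsClosed ((Kᗮ ⊔ Lᗮ : Submodule 𝕜 E) : Set E) :=
    Submodule.isClosed_sup_finiteDimensional _ _ K.isClosed_orthogonal
  have := hK.completeSpace_coe
  have := hL.completeSpace_coe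
  have := hsup.completeSpace_coe
  calc (K ⊓ L)ᗮ = (Kᗮᗮ ⊓ Lᗮᗮ)ᗮ := by simp only [Submodule.orthogonal_orthogonal]
    _ = (Kᗮ ⊔ Lᗮ)ᗮᗮ := by rw [Submodule.inf_orthogonal]
    _ = Kᗮ ⊔ Lᗮ := Submodule.orthogonal_orthogonal _

theorem orthogonal_comap_fst (W : Submodule 𝕜 E) :
    (W.comap (WithLp.fstₗ 2 𝕜 E F))ᗮ =
      Wᗮ.map ((WithLp.linearEquiv 2 𝕜 (E × F)).symm ∘ₗ LinearMap.inl 𝕜 E F) := by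
  ext z
  constructor
  · intro hz
    have hfst : z.fst ∈ Wᗮ := fun w hw ↦ by
      simpa using hz (WithLp.toLp 2 (w, 0)) hw
    have hsnd : z.snd = 0 := inner_self_eq_zero (𝕜 := 𝕜).1 <| by
      simpa using hz (WithLp.toLp 2 (0, z.snd)) W.zero_mem
    exact ⟨z.fst, hfst, WithLp.ofLp_injective 2 (Prod.ext rfl hsnd.symm)⟩
  · rintro ⟨u, hu, rfl⟩ z hz
    simpa using hu z.fst hz

theorem mem_orthogonal_map_snd {K : Submodule 𝕜 (WithLp 2 (E × F))} {y : F} :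
    y ∈ (K.map (WithLp.sndₗ 2 𝕜 E F))ᗮ ↔ WithLp.toLp 2 (0, y) ∈ Kᗮ := by
  simp [Submodule.mem_orthogonal]

theorem orthogonal_symplecticReduction [CompleteSpace E] [CompleteSpace F]
    {V : Submodule 𝕜 (WithLp 2 (E × F))} (hV : IsClosed (V : Set (WithLp 2 (E × F))))
    {W : Submodule 𝕜 E} (hW : IsClosed (W : Set E)) [FiniteDimensional 𝕜 Wᗮ] :
    (symplecticReduction V W)ᗮ = symplecticReduction Vᗮ Wᗮ := by
  have hW' : IsClosed (W.comap (WithLp.fstₗ 2 𝕜 E F) : Set (WithLp 2 (E × F))) :=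
    hW.preimage (WithLp.fstL 2 𝕜 E F).continuous
  have : FiniteDimensional 𝕜 (W.comap (WithLp.fstₗ 2 𝕜 E F))ᗮ := by
    rw [orthogonal_comap_fst]
    infer_instance
  ext y
  rw [symplecticReduction, mem_orthogonal_map_snd,
    orthogonal_inf_eq_sup_of_finiteDimensional_orthogonal hV hW', orthogonal_comap_fst,
    mem_symplecticReduction, Submodule.mem_sup]
  constructor
  · rintro ⟨a, ha, _, ⟨u, hu, rfl⟩, hau⟩
    have hfst : a.fst = -u := eq_neg_of_add_eq_zero_left (congrArg WithLp.fst hau)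
    have hsnd : a.snd = y := (add_zero a.snd).symm.trans (congrArg WithLp.snd hau)
    refine ⟨-u, neg_mem hu, ?_⟩
    rwa [← hfst, ← hsnd]
  · rintro ⟨u, hu, huy⟩
    refine ⟨_, huy, _, ⟨-u, neg_mem hu, rfl⟩, WithLp.ofLp_injective 2 ?_⟩
    simp

theorem stmt_10_general [FiniteDimensional 𝕜 E] [CompleteSpace F]
    {γ₀ : E →ₗ[𝕜] E} (hγ₀ : Function.Injective γ₀) (γ₁ : F →ₗ[𝕜] F)
    {γ : WithLp 2 (E × F) →ₗ[𝕜] WithLp 2 (E × F)}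
    (hγ : ∀ x₀ x₁, γ (WithLp.toLp 2 (x₀, x₁)) = WithLp.toLp 2 (γ₀ x₀, γ₁ x₁))
    {V : Submodule 𝕜 (WithLp 2 (E × F))} (hV_closed : IsClosed (V : Set (WithLp 2 (E × F))))
    (hV : V.map γ = Vᗮ) {W : Submodule 𝕜 E} (hW : W.map γ₀ = Wᗮ) :
    (symplecticReduction V W).map γ₁ = (symplecticReduction V W)ᗮ := by
  have hγ_prod : γ = (γ₀.prodMap γ₁).withLpMap 2 := LinearMap.ext fun z ↦ hγ z.fst z.snd
  have := FiniteDimensional.complete 𝕜 E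
  calc (symplecticReduction V W).map γ₁
      = symplecticReduction (V.map γ) (W.map γ₀) := by rw [hγ_prod, symplecticReduction_map V W hγ₀]
    _ = symplecticReduction Vᗮ Wᗮ := by rw [hV, hW]
    _ = (symplecticReduction V W)ᗮ :=
      (orthogonal_symplecticReduction hV_closed W.closed_of_finiteDimensional).symm

end Orthogonal

/-- Let `(H₀, γ₀)` and `(H₁, γ₁)` be finite-dimensional complex
inner product spaces with unitary automorphisms satisfying `γᵢ² = -id`, and equip
`H₀ × H₁` (with the `ℓ²` product inner product) with `γ(x₀,x₁) = (γ₀ x₀, γ₁ x₁)`.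
If `V ⊆ H₀ × H₁` is Lagrangian and `W ⊆ H₀` is Lagrangian, then the symplectic
reduction `L = {x₁ ∈ H₁ | ∃ w ∈ W, (w, x₁) ∈ V}` is a Lagrangian subspace of `H₁`. -/
theorem stmt_10
    (H₀ H₁ : Type*)
    [NormedAddCommGroup H₀] [InnerProductSpace ℂ H₀] [FiniteDimensional ℂ H₀]
    [NormedAddCommGroup H₁] [InnerProductSpace ℂ H₁] [FiniteDimensional ℂ H₁]
    (γ₀ : H₀ →ₗ[ℂ] H₀)
    (hγ₀_unitary : ∀ x y : H₀, (inner ℂ (γ₀ x) (γ₀ y) : ℂ) = inner ℂ x y)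
    (hγ₀_sq : ∀ x : H₀, γ₀ (γ₀ x) = -x)
    (γ₁ : H₁ →ₗ[ℂ] H₁)
    (hγ₁_unitary : ∀ x y : H₁, (inner ℂ (γ₁ x) (γ₁ y) : ℂ) = inner ℂ x y)
    (hγ₁_sq : ∀ x : H₁, γ₁ (γ₁ x) = -x)
    (γ : WithLp 2 (H₀ × H₁) →ₗ[ℂ] WithLp 2 (H₀ × H₁))
    (hγ : ∀ (x₀ : H₀) (x₁ : H₁),
      γ ((WithLp.equiv 2 (H₀ × H₁)).symm (x₀, x₁))
        = (WithLp.equiv 2 (H₀ × H₁)).symm (γ₀ x₀, γ₁ x₁))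
    (V : Submodule ℂ (WithLp 2 (H₀ × H₁))) (hV : V.map γ = Vᗮ)
    (W : Submodule ℂ H₀) (hW : W.map γ₀ = Wᗮ)
    (L : Submodule ℂ H₁)
    (hL : ∀ x₁ : H₁, x₁ ∈ L ↔ ∃ w ∈ W, (WithLp.equiv 2 (H₀ × H₁)).symm (w, x₁) ∈ V) :
    L.map γ₁ = Lᗮ := by
  have hγ₀ : Function.Injective γ₀ :=
    Function.LeftInverse.injective (g := fun x ↦ -γ₀ x) fun x ↦ by simp only [hγ₀_sq, neg_neg]
  obtain rfl : L = symplecticReduction V W := by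
    ext x₁
    exact (hL x₁).trans mem_symplecticReduction.symm
  exact stmt_10_general hγ₀ γ₁ hγ V.closed_of_finiteDimensional hV hW
end

section
/- The matrices A and B always commute, and the relations C·A·C⁻¹ = A·B² and C·B·C⁻¹ = A³·B⁷ hold if and only if 2φ + 2ψ ∈ ℤ and 3φ + 8ψ ∈ ℤ (equivalently, the row vector (φ,ψ)·(f + I) has integer entries for f = [[1,3],[2,7]]). Consequently, the assignment μ ↦ A, λ ↦ B, τ ↦ C extends to a group homomorphism from the presented group ⟨μ, λ, τ | μλμ⁻¹λ⁻¹ = 1, τμτ⁻¹ = μλ², τλτ⁻¹ = μ³λ⁷⟩ (the fundamental group of the mapping torus of f acting on the 2-torus) to SU(2) exactly when these two congruences hold; in particular they hold for (φ,ψ) = (1/5, −7/10) and for (φ,ψ) = (2/5, −19/10). -/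
/-!
Conjugation by `C` inverts the diagonal torus `θ ↦ diag(e^{2πiθ}, e^{-2πiθ})` of `SU(2)`. Hence the
relation `C·A·C⁻¹ = A^m·B^n` between torus elements of angles `φ` and `ψ` says that the torus
element of angle `φ + mφ + nψ` is trivial, that is, that this angle is an integer; the two
relations together say that `(φ, ψ)(f + I)` is an integer row.
-/

section Presentation

variable {G : Type*} [Group G]

theorem exists_presentedGroup_hom_iff {α : Type*} {rels : Set (FreeGroup α)} {g : α → G} :
    (∃ ρ : PresentedGroup rels →* G, ∀ x, ρ (PresentedGroup.of x) = g x) ↔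
      ∀ r ∈ rels, FreeGroup.lift g r = 1 := by
  constructor
  · rintro ⟨ρ, hρ⟩ r hr
    have lift_eq : FreeGroup.lift g = ρ.comp (PresentedGroup.mk rels) :=
      FreeGroup.ext_hom _ _ fun x ↦
        FreeGroup.lift_apply_of.trans (hρ x).symm
    rw [lift_eq, MonoidHom.comp_apply, PresentedGroup.one_of_mem hr, map_one]
  · exact fun h ↦ ⟨PresentedGroup.toGroup h, fun _ ↦ PresentedGroup.toGroup.of h⟩

/-- The relators of the fundamental group of the mapping torus of `f` acting on the 2-torus.
Generators `0` and `1` are the standard loops of the 2-torus, and conjugation by generator `2` sends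
the `j`-th of them to the element of `ℤ²` given by the `j`-th column of `f`. -/
def torusBundleRels (f : Matrix (Fin 2) (Fin 2) ℤ) : Set (FreeGroup (Fin 3)) :=
  { FreeGroup.of 0 * FreeGroup.of 1 * (FreeGroup.of 0)⁻¹ * (FreeGroup.of 1)⁻¹,
    FreeGroup.of 2 * FreeGroup.of 0 * (FreeGroup.of 2)⁻¹ *
      (FreeGroup.of 0 ^ f 0 0 * FreeGroup.of 1 ^ f 1 0)⁻¹,
    FreeGroup.of 2 * FreeGroup.of 1 * (FreeGroup.of 2)⁻¹ *
      (FreeGroup.of 0 ^ f 0 1 * FreeGroup.of 1 ^ f 1 1)⁻¹ }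

theorem exists_torusBundle_hom_iff {f : Matrix (Fin 2) (Fin 2) ℤ} {a b c : G} :
    (∃ ρ : PresentedGroup (torusBundleRels f) →* G, ρ (PresentedGroup.of 0) = a ∧
        ρ (PresentedGroup.of 1) = b ∧ ρ (PresentedGroup.of 2) = c) ↔
      Commute a b ∧ c * a * c⁻¹ = a ^ f 0 0 * b ^ f 1 0 ∧
        c * b * c⁻¹ = a ^ f 0 1 * b ^ f 1 1 := by
  have h := exists_presentedGroup_hom_iff (rels := torusBundleRels f) (g := ![a, b, c])
  simpa [Fin.forall_fin_succ, torusBundleRels, mul_inv_eq_one,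
    mul_inv_eq_iff_eq_mul (b := a), commute_iff_eq, -mul_inv_rev] using h

end Presentation

section SpecialUnitary

open Matrix

theorem coe_inv_specialUnitaryGroup {n R : Type*} [Fintype n] [DecidableEq n] [CommRing R]
    [StarRing R] (U : specialUnitaryGroup n R) :
    ((U⁻¹ : specialUnitaryGroup n R) : Matrix n n R) = (U : Matrix n n R)⁻¹ :=
  (inv_eq_right_inv (congrArg Subtype.val (mul_inv_cancel U))).symm

/-- The diagonal maximal torus of `SU(2)`, parametrised by the angle measured in full turns. -/
noncomputable def diagonalTorus : AddChar ℝ (specialUnitaryGroup (Fin 2) ℂ) where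
  toFun θ := ⟨!![Complex.exp (2 * (Real.pi : ℂ) * Complex.I * (θ : ℂ)), 0;
                 0, Complex.exp (-(2 * (Real.pi : ℂ) * Complex.I * (θ : ℂ)))], by
    rw [mem_specialUnitaryGroup_iff, mem_unitaryGroup_iff, star_eq_conjTranspose]
    simp [eta_fin_two (conjTranspose _), one_fin_two, ← Complex.exp_conj, ← Complex.exp_add,
      map_ofNat]⟩
  map_zero_eq_one' := Subtype.ext (by simp [one_fin_two])
  map_add_eq_mul' θ η := Subtype.ext (by simp [mul_add, neg_add, -neg_add_rev, Complex.exp_add])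

/-- The standard representative in `SU(2)` of the nontrivial Weyl group element. -/
def weylElement : specialUnitaryGroup (Fin 2) ℂ :=
  ⟨!![0, 1; -1, 0], by
    rw [mem_specialUnitaryGroup_iff, mem_unitaryGroup_iff, star_eq_conjTranspose]
    simp [eta_fin_two (conjTranspose _), one_fin_two]⟩

theorem diagonalTorus_eq_one_iff {θ : ℝ} : diagonalTorus θ = 1 ↔ ∃ n : ℤ, θ = n := by
  have exp_eq_one_iff :
      Complex.exp (2 * (Real.pi : ℂ) * Complex.I * (θ : ℂ)) = 1 ↔ ∃ n : ℤ, θ = n := by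
    rw [Complex.exp_eq_one_iff]
    refine exists_congr fun n ↦ ?_
    rw [mul_comm (n : ℂ), mul_right_inj' Complex.two_pi_I_ne_zero]
    norm_cast
  rw [← exp_eq_one_iff, Subtype.ext_iff]
  simp +contextual [diagonalTorus, one_fin_two, Complex.exp_neg]

theorem commute_diagonalTorus (θ η : ℝ) : Commute (diagonalTorus θ) (diagonalTorus η) := by
  rw [commute_iff_eq, ← AddChar.map_add_eq_mul, add_comm, AddChar.map_add_eq_mul]

theorem weylElement_conj_diagonalTorus (θ : ℝ) :
    weylElement * diagonalTorus θ * weylElement⁻¹ = diagonalTorus (-θ) := by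
  rw [mul_inv_eq_iff_eq_mul, Subtype.ext_iff]
  simp [weylElement, diagonalTorus]

theorem weylElement_conj_eq_zpow_mul_zpow_iff {θ φ ψ : ℝ} {m n : ℤ} :
    weylElement * diagonalTorus θ * weylElement⁻¹ = diagonalTorus φ ^ m * diagonalTorus ψ ^ n ↔
      ∃ k : ℤ, θ + (m * φ + n * ψ) = k := by
  rw [weylElement_conj_diagonalTorus, ← diagonalTorus_eq_one_iff, ← AddChar.map_zsmul_eq_zpow,
    ← AddChar.map_zsmul_eq_zpow, zsmul_eq_mul, zsmul_eq_mul, ← AddChar.map_add_eq_mul,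
    AddChar.map_add_eq_mul _ θ, AddChar.map_neg_eq_inv, inv_eq_iff_mul_eq_one]

theorem vecMul_map_intCast_add_one_apply (f : Matrix (Fin 2) (Fin 2) ℤ) (φ ψ : ℝ) (j : Fin 2) :
    (![φ, ψ] ᵥ* (f.map (↑) + 1)) j = ![φ, ψ] j + (f 0 j * φ + f 1 j * ψ) := by
  rw [vecMul_add, vecMul_one, Pi.add_apply, add_comm]
  simp [vecMul_eq_sum, mul_comm]

theorem weylElement_conj_relations_iff {f : Matrix (Fin 2) (Fin 2) ℤ} {φ ψ : ℝ} :
    (weylElement * diagonalTorus φ * weylElement⁻¹ =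
        diagonalTorus φ ^ f 0 0 * diagonalTorus ψ ^ f 1 0 ∧
      weylElement * diagonalTorus ψ * weylElement⁻¹ =
        diagonalTorus φ ^ f 0 1 * diagonalTorus ψ ^ f 1 1) ↔
      ∀ j, ∃ n : ℤ, (![φ, ψ] ᵥ* (f.map (↑) + 1)) j = n := by
  simp [weylElement_conj_eq_zpow_mul_zpow_iff, vecMul_map_intCast_add_one_apply]

theorem exists_torusBundle_hom_diagonalTorus_iff {f : Matrix (Fin 2) (Fin 2) ℤ} {φ ψ : ℝ} :
    (∃ ρ : PresentedGroup (torusBundleRels f) →* specialUnitaryGroup (Fin 2) ℂ,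
        ρ (PresentedGroup.of 0) = diagonalTorus φ ∧ ρ (PresentedGroup.of 1) = diagonalTorus ψ ∧
          ρ (PresentedGroup.of 2) = weylElement) ↔
      ∀ j, ∃ n : ℤ, (![φ, ψ] ᵥ* (f.map (↑) + 1)) j = n := by
  rw [exists_torusBundle_hom_iff, and_iff_right (commute_diagonalTorus φ ψ),
    weylElement_conj_relations_iff]

theorem vecMul_monodromy_add_one_int_iff {φ ψ : ℝ} :
    (∀ j, ∃ n : ℤ, (![φ, ψ] ᵥ* (!![(1 : ℤ), 3; 2, 7].map (↑) + 1)) j = n) ↔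
      (∃ n : ℤ, 2 * φ + 2 * ψ = n) ∧ ∃ n : ℤ, 3 * φ + 8 * ψ = n := by
  have first_entry : φ + (1 * φ + 2 * ψ) = 2 * φ + 2 * ψ := by ring
  have second_entry : ψ + (3 * φ + 7 * ψ) = 3 * φ + 8 * ψ := by ring
  rw [← first_entry, ← second_entry]
  simp [vecMul_map_intCast_add_one_apply]

end SpecialUnitary

/-- Let `A = diag(e^{2πiφ}, e^{-2πiφ})`, `B = diag(e^{2πiψ}, e^{-2πiψ})`,
`C = [[0,1],[-1,0]]` in `SU(2)`.  Then `A` and `B` always commute, the relations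
`C·A·C⁻¹ = A·B²` and `C·B·C⁻¹ = A³·B⁷` hold iff `2φ + 2ψ ∈ ℤ` and `3φ + 8ψ ∈ ℤ`,
and the assignment `μ ↦ A`, `λ ↦ B`, `τ ↦ C` extends to a homomorphism from the
presented group `⟨μ, λ, τ | μλμ⁻¹λ⁻¹, τμτ⁻¹(μλ²)⁻¹, τλτ⁻¹(μ³λ⁷)⁻¹⟩` (the fundamental
group of the mapping torus of `f = [[1,3],[2,7]]` acting on the 2-torus) to `SU(2)`
exactly when these two congruences hold; in particular they hold for
`(φ,ψ) = (1/5, -7/10)` and for `(φ,ψ) = (2/5, -19/10)`. -/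
theorem stmt_12
    (φ ψ : ℝ)
    (A B C : Matrix (Fin 2) (Fin 2) ℂ)
    (hA : A = !![Complex.exp (2 * (Real.pi : ℂ) * Complex.I * (φ : ℂ)), 0;
                 0, Complex.exp (-(2 * (Real.pi : ℂ) * Complex.I * (φ : ℂ)))])
    (hB : B = !![Complex.exp (2 * (Real.pi : ℂ) * Complex.I * (ψ : ℂ)), 0;
                 0, Complex.exp (-(2 * (Real.pi : ℂ) * Complex.I * (ψ : ℂ)))])
    (hC : C = !![0, 1; -1, 0])
    (a b c : Matrix.specialUnitaryGroup (Fin 2) ℂ)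
    (ha : (a : Matrix (Fin 2) (Fin 2) ℂ) = A)
    (hb : (b : Matrix (Fin 2) (Fin 2) ℂ) = B)
    (hc : (c : Matrix (Fin 2) (Fin 2) ℂ) = C)
    (rels : Set (FreeGroup (Fin 3)))
    (hrels : rels =
      { FreeGroup.of 0 * FreeGroup.of 1 * (FreeGroup.of 0)⁻¹ * (FreeGroup.of 1)⁻¹,
        FreeGroup.of 2 * FreeGroup.of 0 * (FreeGroup.of 2)⁻¹ *
          (FreeGroup.of 0 * FreeGroup.of 1 ^ 2)⁻¹,
        FreeGroup.of 2 * FreeGroup.of 1 * (FreeGroup.of 2)⁻¹ *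
          (FreeGroup.of 0 ^ 3 * FreeGroup.of 1 ^ 7)⁻¹ }) :
    -- `A` and `B` always commute
    A * B = B * A ∧
    -- the two relations hold iff the congruences hold
    ((C * A * C⁻¹ = A * B ^ 2 ∧ C * B * C⁻¹ = A ^ 3 * B ^ 7) ↔
      ((∃ n : ℤ, 2 * φ + 2 * ψ = (n : ℝ)) ∧ (∃ n : ℤ, 3 * φ + 8 * ψ = (n : ℝ)))) ∧
    -- the assignment extends to a group homomorphism exactly when the congruences hold
    ((∃ ρ : PresentedGroup rels →* Matrix.specialUnitaryGroup (Fin 2) ℂ,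
        ρ (PresentedGroup.of 0) = a ∧ ρ (PresentedGroup.of 1) = b ∧
          ρ (PresentedGroup.of 2) = c) ↔
      ((∃ n : ℤ, 2 * φ + 2 * ψ = (n : ℝ)) ∧ (∃ n : ℤ, 3 * φ + 8 * ψ = (n : ℝ)))) ∧
    -- in particular the congruences hold for the two explicit pairs
    (((φ = 1/5 ∧ ψ = -7/10) ∨ (φ = 2/5 ∧ ψ = -19/10)) →
      ((∃ n : ℤ, 2 * φ + 2 * ψ = (n : ℝ)) ∧ (∃ n : ℤ, 3 * φ + 8 * ψ = (n : ℝ)))) := by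
  obtain rfl : a = diagonalTorus φ := Subtype.ext (ha.trans hA)
  obtain rfl : b = diagonalTorus ψ := Subtype.ext (hb.trans hB)
  obtain rfl : c = weylElement := Subtype.ext (hc.trans hC)
  subst ha hb hc
  have rels_eq : rels = torusBundleRels !![1, 3; 2, 7] := by
    simp [hrels, torusBundleRels, zpow_ofNat]
  refine ⟨congrArg Subtype.val (commute_diagonalTorus φ ψ).eq, ?_, ?_, ?_⟩
  · rw [← vecMul_monodromy_add_one_int_iff, ← weylElement_conj_relations_iff,
      Subtype.ext_iff, Subtype.ext_iff]
    simp [coe_inv_specialUnitaryGroup, zpow_ofNat]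
  · subst rels_eq
    rw [exists_torusBundle_hom_diagonalTorus_iff, vecMul_monodromy_add_one_int_iff]
  · rintro (⟨rfl, rfl⟩ | ⟨rfl, rfl⟩)
    · exact ⟨⟨-1, by norm_num⟩, ⟨-5, by norm_num⟩⟩
    · exact ⟨⟨-3, by norm_num⟩, ⟨-14, by norm_num⟩⟩
end

section
/- Let a, b be real numbers, not both zero, and let t > 0. Then the subspace V = span_ℂ{e₀, a·e₁ + b·e₂} of H_t is Lagrangian, i.e. γ_t(V) = V^⊥, and its graph unitary φ(V) : E₊ → E₋ satisfies φ(V)(e₀ − i·t·e₃) = e₀ + i·t·e₃ and φ(V)(e₁ − i·t·e₂) = ((ita + b)/(ita − b))·(e₁ + i·t·e₂). -/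
/-!
Since `γ² = -1`, the image `γ(V)` is also the preimage `γ⁻¹(V)`. As `(a, b) ≠ 0`, the plane `V` is
cut out by the equations `v₃ = 0` and `a v₂ = b v₁`. Evaluated at `v = γ w`, these are exactly the
conditions `⟨e₀, w⟩ = 0` and `⟨a e₁ + b e₂, w⟩ = 0`, because `a` and `b` are real; so `γ(V) = V^⊥`.
The eigenspaces `E₊` and `E₋` meet trivially, so a graph unitary of `V` sends `x ∈ E₊` to the only
`y ∈ E₋` with `x + y ∈ V`, and it remains to check the equations of `V` on two such sums.
-/

open Complex Module.End

theorem map_eq_comap_of_apply_apply_eq_neg {R M : Type*} [Ring R] [AddCommGroup M] [Module R M]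
    {J : M →ₗ[R] M} (hJ : ∀ x, J (J x) = -x) (V : Submodule R M) : V.map J = V.comap J := by
  ext w
  rw [Submodule.mem_map, Submodule.mem_comap]
  constructor
  · rintro ⟨v, hv, rfl⟩
    rw [hJ]
    exact V.neg_mem hv
  · intro hw
    exact ⟨-J w, V.neg_mem hw, by rw [map_neg, hJ, neg_neg]⟩

theorem mem_orthogonalBilin_span {R R₁ R₂ M M₁ M₂ : Type*} [CommSemiring R] [CommSemiring R₁]
    [CommSemiring R₂] [AddCommMonoid M] [AddCommMonoid M₁] [AddCommMonoid M₂] [Module R M]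
    [Module R₁ M₁] [Module R₂ M₂] {σ₁ : R₁ →+* R} {σ₂ : R₂ →+* R}
    (B : M₁ →ₛₗ[σ₁] M₂ →ₛₗ[σ₂] M) (s : Set M₁) (y : M₂) :
    y ∈ (Submodule.span R₁ s).orthogonalBilin B ↔ ∀ x ∈ s, B x y = 0 :=
  Submodule.span_le (p := LinearMap.ker (B.flip y))

theorem graph_apply_eq_of_add_mem {R M : Type*} [Ring R] [AddCommGroup M] [Module R M]
    {E F : Submodule R M} (hEF : Disjoint E F) {V : Set M} {φ : M → M}
    (hφ : ∀ x ∈ E, φ x ∈ F) (hV : ∀ v ∈ V, ∃ x ∈ E, v = x + φ x)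
    {x y : M} (hx : x ∈ E) (hy : y ∈ F) (hxy : x + y ∈ V) : φ x = y := by
  obtain ⟨z, hz, h_sum⟩ := hV _ hxy
  have h_diff : x - z = φ z - y := by
    rw [sub_eq_sub_iff_add_eq_add, h_sum, add_comm]
  have h_zero : x - z = 0 :=
    Submodule.disjoint_def.mp hEF _ (E.sub_mem hx hz) (h_diff ▸ F.sub_mem (hφ z hz) hy)
  obtain rfl : x = z := sub_eq_zero.mp h_zero
  exact (add_left_cancel h_sum).symm

theorem exists_mul_eq_and_mul_eq_iff {K : Type*} [Field K] {a b : K} (hab : ¬(a = 0 ∧ b = 0))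
    (p q : K) : (∃ s, s * a = p ∧ s * b = q) ↔ a * q = b * p := by
  constructor
  · rintro ⟨s, rfl, rfl⟩
    ring
  · intro h
    by_cases ha : a = 0
    · have hb : b ≠ 0 := fun hb ↦ hab ⟨ha, hb⟩
      have hp : p = 0 := by simpa [ha, hb] using h.symm
      exact ⟨q / b, by simp [ha, hp], div_mul_cancel₀ q hb⟩
    · exact ⟨p / a, div_mul_cancel₀ p ha, by field_simp; linear_combination -h⟩

/-- The inner product of `H_t`, conjugate-linear in its first argument, in the basis
`1, dx, dy, dx ∧ dy`. It is defined for every real `t`, but is positive definite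
only for `0 < t`. -/
noncomputable def torusForm (t : ℝ) : (Fin 4 → ℂ) →ₗ⋆[ℂ] (Fin 4 → ℂ) →ₗ[ℂ] ℂ :=
  Matrix.toLinearMapₛₗ₂' ℂ (starRingEnd ℂ) (RingHom.id ℂ) <|
    Matrix.diagonal ![((4 * Real.pi ^ 2 * t : ℝ) : ℂ), ((4 * Real.pi ^ 2 * t : ℝ) : ℂ),
      ((4 * Real.pi ^ 2 / t : ℝ) : ℂ), ((4 * Real.pi ^ 2 / t : ℝ) : ℂ)]

theorem torusForm_apply (t : ℝ) (x y : Fin 4 → ℂ) :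
    torusForm t x y =
      ((4 * Real.pi ^ 2 * t : ℝ) : ℂ) *
          ((starRingEnd ℂ) (x 0) * y 0 + (starRingEnd ℂ) (x 1) * y 1) +
        ((4 * Real.pi ^ 2 / t : ℝ) : ℂ) *
          ((starRingEnd ℂ) (x 2) * y 2 + (starRingEnd ℂ) (x 3) * y 3) := by
  simp only [torusForm, Matrix.toLinearMapₛₗ₂'_apply, RingHom.id_apply, Matrix.diagonal_apply,
    smul_eq_mul, mul_ite, mul_zero, Finset.sum_ite_eq, Finset.mem_univ, ↓reduceIte,
    Fin.sum_univ_four, Matrix.cons_val]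
  ring

/-- The map `γ_t` on `H_t`, in the basis `1, dx, dy, dx ∧ dy`. It squares to `-1` for `t ≠ 0`,
and is `0` for `t = 0`. -/
noncomputable def torusGamma (t : ℝ) : (Fin 4 → ℂ) →ₗ[ℂ] (Fin 4 → ℂ) :=
  Matrix.toLin' !![0, 0, 0, -(1 / (t : ℂ)); 0, 0, -(1 / (t : ℂ)), 0; 0, (t : ℂ), 0, 0;
    (t : ℂ), 0, 0, 0]

theorem torusGamma_apply (t : ℝ) (v : Fin 4 → ℂ) :
    torusGamma t v =
      ![-(1 / (t : ℂ)) * v 3, -(1 / (t : ℂ)) * v 2, (t : ℂ) * v 1, (t : ℂ) * v 0] := by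
  ext i
  fin_cases i <;> simp [torusGamma, Matrix.mulVec, dotProduct, Fin.sum_univ_four]

theorem torusGamma_torusGamma {t : ℝ} (ht : t ≠ 0) (v : Fin 4 → ℂ) :
    torusGamma t (torusGamma t v) = -v := by
  ext i
  fin_cases i <;> simp [torusGamma_apply, ht]

/-- The subspace `V = span {e₀, a e₁ + b e₂}`, over an arbitrary field; it is a plane unless
`a = b = 0`. -/
def torusPlane {K : Type*} [Field K] (a b : K) : Submodule K (Fin 4 → K) :=
  Submodule.span K {![1, 0, 0, 0], ![0, a, b, 0]}

theorem mem_torusPlane_iff {K : Type*} [Field K] {a b : K} (hab : ¬(a = 0 ∧ b = 0))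
    (v : Fin 4 → K) : v ∈ torusPlane a b ↔ v 3 = 0 ∧ a * v 2 = b * v 1 := by
  rw [← exists_mul_eq_and_mul_eq_iff hab, torusPlane, Submodule.mem_span_pair]
  constructor
  · rintro ⟨r, s, rfl⟩
    exact ⟨by simp, s, by simp, by simp⟩
  · rintro ⟨h₃, s, h₁, h₂⟩
    refine ⟨v 0, s, ?_⟩
    ext i
    fin_cases i <;> simp [h₁, h₂, h₃]

theorem map_torusGamma_torusPlane {t : ℝ} (ht : t ≠ 0) {a b : ℝ} (hab : ¬(a = 0 ∧ b = 0)) :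
    (torusPlane (a : ℂ) b).map (torusGamma t) =
      (torusPlane (a : ℂ) b).orthogonalBilin (torusForm t) := by
  have hπ : (4 * Real.pi ^ 2 : ℂ) ≠ 0 := by simp [Real.pi_ne_zero]
  rw [map_eq_comap_of_apply_apply_eq_neg (torusGamma_torusGamma ht)]
  ext w
  have h_e₀ : torusForm t ![1, 0, 0, 0] w = 4 * Real.pi ^ 2 * torusGamma t w 3 := by
    simp [torusForm_apply, torusGamma_apply, mul_assoc]
  have h_e₁₂ : torusForm t ![0, a, b, 0] w =
      4 * Real.pi ^ 2 * (a * torusGamma t w 2 - b * torusGamma t w 1) := by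
    simp only [torusForm_apply, torusGamma_apply, Matrix.cons_val, conj_ofReal, map_zero]
    push_cast
    ring
  rw [Submodule.mem_comap, mem_torusPlane_iff (mod_cast hab), torusPlane,
    mem_orthogonalBilin_span]
  simp only [Set.mem_insert_iff, Set.mem_singleton_iff, forall_eq_or_imp, forall_eq, h_e₀, h_e₁₂,
    mul_eq_zero_iff_left hπ, sub_eq_zero]

theorem mem_eigenspace_torusGamma_iff {t : ℝ} (ht : t ≠ 0) {μ : ℂ} (hμ : μ * μ = -1)
    (v : Fin 4 → ℂ) :
    v ∈ eigenspace (torusGamma t) μ ↔ v 2 = -(μ * t * v 1) ∧ v 3 = -(μ * t * v 0) := by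
  have htC : (t : ℂ) ≠ 0 := ofReal_ne_zero.mpr ht
  rw [mem_eigenspace_iff, torusGamma_apply]
  constructor
  · intro h
    have h₂ : t * v 1 = μ * v 2 := congrFun h 2
    have h₃ : t * v 0 = μ * v 3 := congrFun h 3
    exact ⟨by linear_combination μ * h₂ + v 2 * hμ, by linear_combination μ * h₃ + v 3 * hμ⟩
  · rintro ⟨h₂, h₃⟩
    have e₀ : -(1 / (t : ℂ)) * v 3 = μ * v 0 := by rw [h₃]; field_simp
    have e₁ : -(1 / (t : ℂ)) * v 2 = μ * v 1 := by rw [h₂]; field_simp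
    have e₂ : t * v 1 = μ * v 2 := by rw [h₂]; linear_combination (t * v 1) * hμ
    have e₃ : t * v 0 = μ * v 3 := by rw [h₃]; linear_combination (t * v 0) * hμ
    ext i
    fin_cases i
    exacts [e₀, e₁, e₂, e₃]

theorem I_mul_mul_sub_ne_zero {t a b : ℝ} (ht : t ≠ 0) (hab : ¬(a = 0 ∧ b = 0)) :
    I * t * a - b ≠ 0 := by
  intro h
  have h_re : b = 0 := by simpa using congrArg re h
  have h_im : a = 0 := by simpa [ht] using congrArg im h
  exact hab ⟨h_im, h_re⟩

theorem add_smul_mem_torusPlane_iff {t a b : ℝ} (ht : t ≠ 0) (hab : ¬(a = 0 ∧ b = 0)) (c : ℂ) :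
    ![0, 1, -(I * t), 0] + c • ![0, 1, I * t, 0] ∈ torusPlane (a : ℂ) b ↔
      c = (I * t * a + b) / (I * t * a - b) := by
  have h_plane : ![0, 1, -(I * t), 0] + c • ![0, 1, I * t, 0] ∈ torusPlane (a : ℂ) b ↔
      a * (-(I * t) + c * (I * t)) = b * (1 + c) := by
    simp [mem_torusPlane_iff (K := ℂ) (a := a) (b := b) (mod_cast hab)]
  rw [h_plane, eq_div_iff (I_mul_mul_sub_ne_zero ht hab)]
  constructor <;> intro h <;> linear_combination h

/-- Let `a, b` be real numbers, not both zero, and `t > 0`.  In the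
torus model `H_t` (with weighted inner product `ip` and unitary `γ_t` as in the
context), the subspace `V = span_ℂ {e₀, a e₁ + b e₂}` is Lagrangian, i.e.
`γ_t(V) = V^⊥`, and its graph unitary `φ(V) : E₊ → E₋` satisfies
`φ(V)(e₀ - i t e₃) = e₀ + i t e₃` and
`φ(V)(e₁ - i t e₂) = ((ita + b)/(ita - b))·(e₁ + i t e₂)`. -/
theorem stmt_15
    (t : ℝ) (ht : 0 < t)
    (a b : ℝ) (hab : ¬(a = 0 ∧ b = 0))
    (γ : (Fin 4 → ℂ) →ₗ[ℂ] (Fin 4 → ℂ))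
    (hγ : ∀ v : Fin 4 → ℂ,
      γ v = ![-(1 / (t : ℂ)) * v 3, -(1 / (t : ℂ)) * v 2, (t : ℂ) * v 1, (t : ℂ) * v 0])
    (ip : (Fin 4 → ℂ) → (Fin 4 → ℂ) → ℂ)
    (hip : ∀ x y : Fin 4 → ℂ,
      ip x y =
        ((4 * Real.pi ^ 2 * t : ℝ) : ℂ) *
            ((starRingEnd ℂ) (x 0) * y 0 + (starRingEnd ℂ) (x 1) * y 1) +
          ((4 * Real.pi ^ 2 / t : ℝ) : ℂ) *
            ((starRingEnd ℂ) (x 2) * y 2 + (starRingEnd ℂ) (x 3) * y 3))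
    (V : Submodule ℂ (Fin 4 → ℂ))
    (hV : V = Submodule.span ℂ {![1, 0, 0, 0], ![0, (a : ℂ), (b : ℂ), 0]})
    -- `φ` is the graph unitary of `V`: it maps the `(+i)`-eigenspace of `γ_t`
    -- into the `(-i)`-eigenspace, and `V = {x + φ x | x ∈ E₊}`
    (φ : (Fin 4 → ℂ) → (Fin 4 → ℂ))
    (hφmem : ∀ x : Fin 4 → ℂ, γ x = Complex.I • x → γ (φ x) = -(Complex.I • φ x))
    (hφgraph : ∀ v : Fin 4 → ℂ,
      v ∈ V ↔ ∃ x : Fin 4 → ℂ, γ x = Complex.I • x ∧ v = x + φ x) :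
    -- `V` is Lagrangian: `γ_t(V)` is the `ip`-orthogonal complement of `V`
    (γ '' (V : Set (Fin 4 → ℂ)) = {w : Fin 4 → ℂ | ∀ v ∈ V, ip v w = 0}) ∧
    -- the values of the graph unitary
    φ ![1, 0, 0, -(Complex.I * (t : ℂ))] = ![1, 0, 0, Complex.I * (t : ℂ)] ∧
    φ ![0, 1, -(Complex.I * (t : ℂ)), 0] =
      ((Complex.I * (t : ℂ) * (a : ℂ) + (b : ℂ)) / (Complex.I * (t : ℂ) * (a : ℂ) - (b : ℂ))) •
        ![0, 1, Complex.I * (t : ℂ), 0] := by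
  obtain rfl : γ = torusGamma t := LinearMap.ext fun v ↦ (hγ v).trans (torusGamma_apply t v).symm
  obtain rfl : ip = fun x y ↦ torusForm t x y :=
    funext₂ fun x y ↦ (hip x y).trans (torusForm_apply t x y).symm
  obtain rfl : V = torusPlane (a : ℂ) b := hV
  have h_disjoint : Disjoint (eigenspace (torusGamma t) I) (eigenspace (torusGamma t) (-I)) :=
    disjoint_genEigenspace _ (self_ne_neg.mpr I_ne_zero) 1 1
  have φ_eq {x y : Fin 4 → ℂ} : x ∈ eigenspace (torusGamma t) I →
      y ∈ eigenspace (torusGamma t) (-I) → x + y ∈ torusPlane (a : ℂ) b → φ x = y :=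
    graph_apply_eq_of_add_mem h_disjoint
      (fun x hx ↦ mem_eigenspace_iff.mpr <|
        (hφmem x <| mem_eigenspace_iff.mp hx).trans (neg_smul _ _).symm)
      (fun v hv ↦ by simpa only [mem_eigenspace_iff] using (hφgraph v).mp hv)
  have mem_plus := mem_eigenspace_torusGamma_iff ht.ne' I_mul_I
  have mem_minus := mem_eigenspace_torusGamma_iff ht.ne' (μ := -I) (by simp)
  refine ⟨congrArg SetLike.coe (map_torusGamma_torusPlane ht.ne' hab), φ_eq ?_ ?_ ?_, φ_eq ?_ ?_ ?_⟩
  · simp [mem_plus]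
  · simp [mem_minus]
  · simp [mem_torusPlane_iff (K := ℂ) (a := a) (b := b) (mod_cast hab)]
  · simp [mem_plus]
  · exact Submodule.smul_mem _ _ (by simp [mem_minus])
  · exact (add_smul_mem_torusPlane_iff ht.ne' hab _).mpr rfl
end
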